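/- arXiv:1905.11491 — 5 statements merged into one kernel-verified Lean document; each statement's English description precedes it below -/
import Mathlib

section
/- Let q > 0 and let P : ℝ³ → (0, ∞) be a continuous function with P(−x) = P(x) for all x and ∫_{ℝ³} |x| P(x)^{−q} dx < ∞. Then there exists a continuous function v : ℝ³ → ℝ with v(−x) = v(x) for all x, sup_{x∈ℝ³} |v(x)|/(1+|x|) < ∞, min_{ℝ³} v = v(0) = 0, satisfying v(x) = (1/8π)∫_{ℝ³} (|x−y| − |y|) (P(y) + v(y))^{−q} dy for all x ∈ ℝ³, and lim_{|x|→∞} v(x)/|x| = (1/8π)∫_{ℝ³} (P(y) + v(y))^{−q} dy. -/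
open MeasureTheory Filter Topology Real

lemma det_interp {ι : Type*} [Fintype ι] (s : Finset ℝ) (hs : Fintype.card ι < s.card)
    (A : EuclideanSpace ℝ ι →L[ℝ] EuclideanSpace ℝ ι) :
    (1 + A).det = ∑ t ∈ s, (1 + t • A).det * (Lagrange.basis s id t).eval 1 := by
  classical
  let b := (EuclideanSpace.basisFun ι ℝ).toBasis
  let M := LinearMap.toMatrix b b (A : EuclideanSpace ℝ ι →ₗ[ℝ] EuclideanSpace ℝ ι)
  let p : Polynomial ℝ := Matrix.det ((Polynomial.X : Polynomial ℝ) • M.map Polynomial.C +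
    (1 : Matrix ι ι ℝ).map Polynomial.C)
  have hp : ∀ t : ℝ, p.eval t = (1 + t • A).det := by
    intro t
    have h1 : (1 + t • A).det = Matrix.det (1 + t • M) := by
      rw [ContinuousLinearMap.det, ← LinearMap.det_toMatrix b]
      congr 1
      have : ((1 + t • A : EuclideanSpace ℝ ι →L[ℝ] EuclideanSpace ℝ ι) :
        EuclideanSpace ℝ ι →ₗ[ℝ] EuclideanSpace ℝ ι) = LinearMap.id + t • (A : EuclideanSpace ℝ ι →ₗ[ℝ] EuclideanSpace ℝ ι) := by
        ext; simp
      rw [this, map_add, map_smul, LinearMap.toMatrix_id]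
    rw [h1]
    simp only [p]
    rw [← Polynomial.coe_evalRingHom, RingHom.map_det]
    congr 1
    ext i j
    simp [Matrix.one_apply, add_comm]
    split_ifs <;> simp [mul_comm]
  have hd : p.degree < s.card := by
    refine lt_of_le_of_lt Polynomial.degree_le_natDegree ?_
    exact_mod_cast lt_of_le_of_lt (Polynomial.natDegree_det_X_add_C_le M 1) hs
  have h := Lagrange.eq_interpolate (s := s) (v := id) (Set.injOn_id _) hd
  have h1 := congrArg (Polynomial.eval 1) h
  rw [hp] at h1
  rw [one_smul] at h1
  rw [h1, Lagrange.interpolate_apply, Polynomial.eval_finsetSum]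
  refine Finset.sum_congr rfl fun t _ => ?_
  simp [hp]

lemma sum_basis_one (s : Finset ℝ) (hs : s.Nonempty) :
    ∑ t ∈ s, (Lagrange.basis s id t).eval 1 = 1 := by
  have := congrArg (Polynomial.eval 1) (Lagrange.sum_basis (s := s) (v := id) (Set.injOn_id _) hs)
  rwa [Polynomial.eval_finsetSum, Polynomial.eval_one] at this

/-- extension by zero of a Lipschitz function vanishing on the sphere -/
lemma lip_ext {E : Type*} [NormedAddCommGroup E] [NormedSpace ℝ E] {ρ : ℝ} {C : NNReal}
    {g : E → E} (hg : LipschitzOnWith C g (Metric.closedBall 0 ρ))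
    (h0 : ∀ x, ρ ≤ ‖x‖ → g x = 0) : LipschitzWith C g := by
  have key : ∀ x y, ‖x‖ ≤ ρ → ρ ≤ ‖y‖ → dist (g x) (g y) ≤ C * dist x y := by
    intro x y hx hy
    have hc : ContinuousOn (fun t : ℝ => ‖AffineMap.lineMap x y t‖) (Set.Icc 0 1) := by
      apply Continuous.continuousOn
      exact continuous_norm.comp AffineMap.lineMap_continuous
    have := intermediate_value_Icc (zero_le_one) hc
    have hm : ρ ∈ Set.Icc ‖AffineMap.lineMap x y (0:ℝ)‖ ‖AffineMap.lineMap x y (1:ℝ)‖ := by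
      simpa using ⟨hx, hy⟩
    obtain ⟨t, ht, hz⟩ := this hm
    dsimp only at hz
    rw [h0 y hy, ← h0 _ hz.ge]
    refine (hg.dist_le_mul x (by simpa using hx) _ (by simpa using hz.le)).trans ?_
    gcongr
    rw [dist_left_lineMap]
    have : ‖t‖ ≤ 1 := by rw [Real.norm_eq_abs, abs_le]; constructor <;> linarith [ht.1, ht.2]
    nlinarith [dist_nonneg (x := x) (y := y)]
  refine LipschitzWith.of_dist_le_mul fun x y => ?_
  rcases le_total ‖x‖ ρ with hx | hx <;> rcases le_total ‖y‖ ρ with hy | hy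
  · exact hg.dist_le_mul x (by simpa using hx) y (by simpa using hy)
  · exact key x y hx hy
  · rw [dist_comm, dist_comm x]; exact key y x hy hx
  · rw [h0 x hx, h0 y hy, dist_self]; positivity

lemma vol_eq {ι : Type*} [Fintype ι] {ρ : ℝ} {C : NNReal}
    {g : EuclideanSpace ℝ ι → EuclideanSpace ℝ ι}
    {g' : EuclideanSpace ℝ ι → EuclideanSpace ℝ ι →L[ℝ] EuclideanSpace ℝ ι}
    (hg : LipschitzWith C g) (h0 : ∀ x, ρ ≤ ‖x‖ → g x = 0)
    (hd : ∀ x ∈ Metric.ball 0 ρ, HasFDerivAt g (g' x) x) {t : ℝ} (ht : |t| * C < 1)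
    (hpos : ∀ x ∈ Metric.ball 0 ρ, 0 ≤ (1 + t • g' x).det) :
    ∫ x in Metric.ball 0 ρ, (1 + t • g' x).det = 
      (volume (Metric.ball (0 : EuclideanSpace ℝ ι) ρ)).toReal := by
  set F : EuclideanSpace ℝ ι → EuclideanSpace ℝ ι := fun x => x + t • g x with hF
  have hinj : Function.Injective F := by
    intro x y hxy
    have h1 : x - y = t • (g y - g x) := by
      simp only [hF] at hxy
      rw [smul_sub, sub_eq_sub_iff_add_eq_add, hxy, add_comm]
    have h2 : ‖x - y‖ ≤ |t| * C * ‖x - y‖ := by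
      calc ‖x - y‖ = |t| * ‖g y - g x‖ := by rw [h1, norm_smul, Real.norm_eq_abs]
        _ ≤ |t| * (C * ‖y - x‖) := by
          gcongr
          exact hg.norm_sub_le y x
        _ = _ := by rw [norm_sub_rev]; ring
    have h3 : ‖x - y‖ = 0 := by nlinarith [norm_nonneg (x - y)]
    exact sub_eq_zero.1 (norm_eq_zero.1 h3)
  have hsurj : Function.Surjective F := by
    intro y
    let K : NNReal := ⟨|t|, abs_nonneg t⟩ * C
    have hK : ContractingWith K (fun x => y - t • g x) := by
      refine ⟨?_, LipschitzWith.of_dist_le_mul fun a b => ?_⟩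
      · exact_mod_cast ht
      · have : dist (y - t • g a) (y - t • g b) = |t| * dist (g a) (g b) := by
          rw [dist_sub_left, dist_smul₀, Real.norm_eq_abs]
        rw [this]
        have := hg.dist_le_mul a b
        calc |t| * dist (g a) (g b) ≤ |t| * (C * dist a b) := by gcongr
          _ = _ := by
            have hKc : (K : ℝ) = |t| * C := rfl
            rw [hKc]; ring
    refine ⟨hK.fixedPoint, ?_⟩
    have := hK.fixedPoint_isFixedPt
    simp only [Function.IsFixedPt] at this
    simp only [hF]
    nth_rewrite 1 [← this]
    simp
  have hout : ∀ x, ρ ≤ ‖x‖ → F x = x := by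
    intro x hx; simp [hF, h0 x hx]
  have himg : F '' Metric.ball 0 ρ = Metric.ball 0 ρ := by
    ext y
    constructor
    · rintro ⟨x, hx, rfl⟩
      by_contra h
      have h' : ρ ≤ ‖F x‖ := by simpa using h
      have := hinj (hout _ h')
      rw [this] at h'
      simp at hx; linarith
    · intro hy
      obtain ⟨x, rfl⟩ := hsurj y
      refine ⟨x, ?_, rfl⟩
      by_contra h
      have h' : ρ ≤ ‖x‖ := by simpa using h
      rw [hout x h'] at hy
      exact h hy
  have hder : ∀ x ∈ Metric.ball 0 ρ, HasFDerivWithinAt F (1 + t • g' x) (Metric.ball 0 ρ) x := by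
    intro x hx
    exact ((hasFDerivAt_id x).add ((hd x hx).const_smul t)).hasFDerivWithinAt
  have := integral_image_eq_integral_abs_det_fderiv_smul volume measurableSet_ball hder
    hinj.injOn (fun _ => (1:ℝ))
  rw [himg] at this
  simp at this
  rw [← Measure.real, this]
  refine setIntegral_congr_fun measurableSet_ball fun x hx => ?_
  simp [abs_of_nonneg (hpos x hx)]

lemma no_retraction {ι : Type*} [Fintype ι] {ρ : ℝ} (hρ : 0 < ρ)
    {r : EuclideanSpace ℝ ι → EuclideanSpace ℝ ι} (hr : ContDiff ℝ 1 r)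
    (hid : ∀ x, ‖x‖ = ρ → r x = x) (hn : ∀ x, ‖r x‖ = ρ) : False := by
  classical
  let g : EuclideanSpace ℝ ι → EuclideanSpace ℝ ι := fun x => if ‖x‖ < ρ then r x - x else 0
  have hr1 : ContDiff ℝ 1 (fun x => r x - x) := hr.sub contDiff_id
  have h0 : ∀ x, ρ ≤ ‖x‖ → g x = 0 := fun x hx => by simp [g, not_lt.2 hx]
  have hgeq : Set.EqOn g (fun x => r x - x) (Metric.closedBall 0 ρ) := by
    intro x hx
    simp only [g]
    split_ifs with h
    · rfl
    · have : ‖x‖ = ρ := le_antisymm (by simpa using hx) (not_lt.1 h)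
      simp [hid x this]
  obtain ⟨C, hC⟩ : ∃ C : NNReal, LipschitzOnWith C g (Metric.closedBall 0 ρ) := by
    obtain ⟨C, hC⟩ := hr1.locallyLipschitz.locallyLipschitzOn.exists_lipschitzOnWith_of_compact
      (isCompact_closedBall (0 : EuclideanSpace ℝ ι) ρ)
    refine ⟨C, fun x hx y hy => ?_⟩
    rw [hgeq hx, hgeq hy]; exact hC hx hy
  have hL := lip_ext hC h0
  let g' := fun x => fderiv ℝ (fun x => r x - x) x
  have hg'c : Continuous g' := hr1.continuous_fderiv one_ne_zero
  have hd : ∀ x ∈ Metric.ball 0 ρ, HasFDerivAt g (g' x) x := by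
    intro x hx
    have := ((hr1.differentiable one_ne_zero) x).hasFDerivAt
    refine this.congr_of_eventuallyEq ?_
    filter_upwards [Metric.isOpen_ball.mem_nhds hx] with y hy
    exact hgeq (Metric.ball_subset_closedBall hy)
  -- small t
  obtain ⟨B, hB⟩ : ∃ B, ∀ x ∈ Metric.closedBall (0 : EuclideanSpace ℝ ι) ρ, ‖g' x‖ ≤ B :=
    (isCompact_closedBall _ _).exists_bound_of_continuousOn hg'c.continuousOn
  have hdet : ∀ᶠ A : EuclideanSpace ℝ ι →L[ℝ] EuclideanSpace ℝ ι in 𝓝 0, 0 < (1 + A).det := by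
    have hc : Continuous fun A : EuclideanSpace ℝ ι →L[ℝ] EuclideanSpace ℝ ι => (1 + A).det :=
      ContinuousLinearMap.continuous_det.comp (continuous_const.add continuous_id)
    refine hc.continuousAt.eventually (lt_mem_nhds ?_)
    simp [ContinuousLinearMap.det]
  obtain ⟨δ, hδ, hδ'⟩ := Metric.eventually_nhds_iff.1 hdet
  let ε : ℝ := min (1 / (C + 1)) (δ / (|B| + 1))
  have hε : 0 < ε := by positivity
  obtain ⟨s, hsub, hcard⟩ := (Set.Ioo_infinite hε).exists_subset_card_eq (Fintype.card ι + 1)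
  have hvol : ∀ t ∈ s, ∫ x in Metric.ball 0 ρ, (1 + t • g' x).det = 
      (volume (Metric.ball (0 : EuclideanSpace ℝ ι) ρ)).toReal := by
    intro t ht
    obtain ⟨ht0, ht1⟩ := hsub ht
    have ht2 : t < 1 / (C + 1) := ht1.trans_le (min_le_left _ _)
    have ht3 : t < δ / (|B| + 1) := ht1.trans_le (min_le_right _ _)
    rw [lt_div_iff₀ (by positivity)] at ht2 ht3
    refine vol_eq hL h0 hd ?_ ?_
    · rw [abs_of_pos ht0]; linarith
    · intro x hx
      refine (hδ' ?_).le
      rw [dist_zero_right, norm_smul, Real.norm_eq_abs, abs_of_pos ht0]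
      have := (hB x (Metric.ball_subset_closedBall hx)).trans (le_abs_self B)
      nlinarith
  have hzero : ∀ x, (1 + g' x).det = 0 := by
    intro x
    have h1 : 1 + g' x = fderiv ℝ r x := by
      have : g' x = fderiv ℝ r x - 1 := by
        exact (((hr.differentiable one_ne_zero) x).hasFDerivAt.sub (hasFDerivAt_id x)).fderiv
      rw [this]; abel
    rw [h1]
    by_contra hne
    have hsurj : Function.Surjective (fderiv ℝ r x) := by
      exact ((fderiv ℝ r x).toContinuousLinearEquivOfDetNeZero hne).surjective
    obtain ⟨w, hw⟩ := hsurj (r x)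
    have hd1 : HasFDerivAt r (fderiv ℝ r x) x := ((hr.differentiable one_ne_zero) x).hasFDerivAt
    have hd2 := hd1.norm_sq
    have hconst : (fun y => ‖r y‖ ^ 2) = fun _ => ρ ^ 2 := by ext y; rw [hn]
    rw [hconst] at hd2
    have hd3 := hd2.unique (hasFDerivAt_const _ _)
    have := congrArg (fun L => L w) hd3
    simp [hw, hn, hρ.ne'] at this
  have hint : ∀ t : ℝ, IntegrableOn (fun x => (1 + t • g' x).det) (Metric.ball 0 ρ) := by
    intro t
    have hc : Continuous fun x => (1 + t • g' x).det :=
      ContinuousLinearMap.continuous_det.comp (continuous_const.add (hg'c.const_smul t))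
    exact (hc.continuousOn.integrableOn_compact (isCompact_closedBall _ _)).mono_set
      Metric.ball_subset_closedBall
  have hsne : s.Nonempty := Finset.card_pos.1 (by omega)
  have hfin : (0:ℝ) = (volume (Metric.ball (0 : EuclideanSpace ℝ ι) ρ)).toReal := by
    calc (0:ℝ) = ∫ x in Metric.ball 0 ρ, (1 + g' x).det := by simp [hzero]
      _ = ∫ x in Metric.ball 0 ρ, ∑ t ∈ s, (1 + t • g' x).det * (Lagrange.basis s id t).eval 1 := by
        congr 1; ext x; exact det_interp s (by omega) _
      _ = ∑ t ∈ s, (volume (Metric.ball (0 : EuclideanSpace ℝ ι) ρ)).toReal *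
            (Lagrange.basis s id t).eval 1 := by
        rw [integral_finsetSum _ (fun t _ => (hint t).mul_const _)]
        refine Finset.sum_congr rfl fun t ht => ?_
        rw [integral_mul_const, hvol t ht]
      _ = _ := by rw [← Finset.mul_sum, sum_basis_one s hsne, mul_one]
  have hp : 0 < volume (Metric.ball (0 : EuclideanSpace ℝ ι) ρ) := Metric.measure_ball_pos _ _ hρ
  exact absurd hfin (ENNReal.toReal_pos hp.ne' measure_ball_lt_top.ne).ne

lemma brouwer {ι : Type*} [Fintype ι] {R : ℝ}
    {G : EuclideanSpace ℝ ι → EuclideanSpace ℝ ι} (hG : Continuous G) (hR : ∀ x, ‖G x‖ ≤ R) :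
    ∃ x, G x = x := by
  by_contra! hno
  have hR0 : 0 ≤ R := (norm_nonneg _).trans (hR 0)
  obtain ⟨x₀, -, hx₀⟩ := (isCompact_closedBall (0 : EuclideanSpace ℝ ι) (R + 1)).exists_isMinOn
    ⟨0, by simp; linarith⟩ (f := fun x => ‖G x - x‖) (by fun_prop)
  have hδ : 0 < ‖G x₀ - x₀‖ := norm_pos_iff.2 (sub_ne_zero.2 (hno x₀))
  set δ := min ‖G x₀ - x₀‖ 1 with hδd
  have hδ0 : 0 < δ := lt_min hδ one_pos
  obtain ⟨H, hHd', hH, -⟩ := hG.exists_contDiff_approx 1 (ε := fun _ => δ) continuous_const (fun _ => hδ0)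
  have hHR : ∀ x, ‖H x‖ ≤ R + 1 := by
    intro x
    have h1 := hH x
    rw [dist_eq_norm] at h1
    have h2 := hR x
    have h3 : δ ≤ 1 := min_le_right _ _
    have := norm_le_norm_add_norm_sub' (H x) (G x)
    linarith
  have hHd : ContDiff ℝ 1 H := hHd'
  let χ : ContDiffBump (0 : EuclideanSpace ℝ ι) := ⟨R + 1, R + 2, by linarith, by linarith⟩
  let F := fun x => x - χ x • H x
  have hFd : ContDiff ℝ 1 F := contDiff_id.sub (χ.contDiff.smul hHd)
  have hF0 : ∀ x, F x ≠ 0 := by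
    intro x hx
    have hx1 : x = χ x • H x := sub_eq_zero.1 hx
    have hx2 : ‖x‖ ≤ R + 1 := by
      rw [hx1, norm_smul, Real.norm_eq_abs, abs_of_nonneg χ.nonneg]
      have := hHR x
      nlinarith [χ.le_one (x := x), χ.nonneg (x := x), norm_nonneg (H x)]
    have hx3 : χ x = 1 := χ.one_of_mem_closedBall (by simpa using hx2)
    rw [hx3, one_smul] at hx1
    have h1 := hH x
    rw [← hx1, dist_comm, dist_eq_norm] at h1
    have h2 := hx₀ (show x ∈ Metric.closedBall 0 (R+1) by simpa using hx2)
    have h3 : δ ≤ ‖G x₀ - x₀‖ := min_le_left _ _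
    simp at h2
    linarith
  have hρ : 0 < R + 2 := by linarith
  refine no_retraction hρ (r := fun x => ((R + 2) / ‖F x‖) • F x) ?_ ?_ ?_
  · exact (contDiff_const.div (hFd.norm ℝ hF0) (fun x => norm_ne_zero_iff.2 (hF0 x))).smul hFd
  · intro x hx
    have : χ x = 0 := χ.zero_of_le_dist (by simp [χ, hx])
    simp [F, this, hx, hρ.ne']
  · intro x
    have := norm_ne_zero_iff.2 (hF0 x)
    rw [norm_smul, norm_div, norm_norm, div_mul_cancel₀ _ this, Real.norm_eq_abs, abs_of_pos hρ]

noncomputable def kk (x y : EuclideanSpace ℝ (Fin 3)) : ℝ := (‖x - y‖ + ‖x + y‖) / 2 - ‖y‖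

lemma kk_nonneg (x y) : 0 ≤ kk x y := by
  have h : (2 : ℝ) • y = (x + y) - (x - y) := by rw [two_smul]; abel
  have h1 := norm_sub_le (x + y) (x - y)
  rw [← h, norm_smul] at h1
  simp at h1
  unfold kk; linarith

lemma kk_le (x y) : kk x y ≤ ‖x‖ := by
  have h1 := norm_sub_le x y
  have h2 := norm_add_le x y
  unfold kk; linarith

lemma kk_lip (x x' y) : |kk x y - kk x' y| ≤ ‖x - x'‖ := by
  have h1 := abs_le.1 (abs_norm_sub_norm_le (x - y) (x' - y))
  have h2 := abs_le.1 (abs_norm_sub_norm_le (x + y) (x' + y))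
  rw [sub_sub_sub_cancel_right] at h1
  rw [add_sub_add_right_eq_sub] at h2
  unfold kk
  rw [abs_le]; constructor <;> linarith [h1.1, h1.2, h2.1, h2.2]

lemma kk_neg (x y) : kk (-x) y = kk x y := by
  unfold kk
  have h1 : ‖-x - y‖ = ‖x + y‖ := by rw [← norm_neg]; congr 1; abel
  have h2 : ‖-x + y‖ = ‖x - y‖ := by rw [← norm_neg]; congr 1; abel
  rw [h1, h2, add_comm]

lemma kk_zero (y) : kk 0 y = 0 := by simp [kk]

lemma kk_cont (x) : Continuous (kk x) := by unfold kk; fun_prop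

noncomputable def TT (q : ℝ) (P w : EuclideanSpace ℝ (Fin 3) → ℝ) (x : EuclideanSpace ℝ (Fin 3)) : ℝ :=
  (8 * π)⁻¹ * ∫ y, kk x y * (P y + w y) ^ (-q)

section
variable {q : ℝ} {P : EuclideanSpace ℝ (Fin 3) → ℝ}

lemma int_P (hPcont : Continuous P) (hPpos : ∀ x, 0 < P x)
    (hPint : Integrable (fun x => ‖x‖ * (P x) ^ (-q))) : Integrable (fun x => (P x) ^ (-q)) := by
  have hc : Continuous (fun x => (P x) ^ (-q)) :=
    hPcont.rpow_const fun x => Or.inl (hPpos x).ne'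
  have h1 : IntegrableOn (fun x => (P x) ^ (-q)) (Metric.closedBall 0 1) :=
    hc.continuousOn.integrableOn_compact (isCompact_closedBall _ _)
  have h2 := (integrable_indicator_iff (Metric.isClosed_closedBall.measurableSet)).2 h1
  refine (h2.add hPint).mono' hc.aestronglyMeasurable (Eventually.of_forall fun x => ?_)
  have hp : 0 < P x ^ (-q) := Real.rpow_pos_of_pos (hPpos x) _
  rw [Real.norm_eq_abs, abs_of_pos hp]
  simp only [Pi.add_apply, Set.indicator]
  split_ifs with h
  · have : 0 ≤ ‖x‖ * P x ^ (-q) := by positivity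
    linarith
  · have : 1 < ‖x‖ := by simpa using h
    nlinarith

lemma dens_le (hq : 0 < q) (hPpos : ∀ x, 0 < P x) {w : EuclideanSpace ℝ (Fin 3) → ℝ}
    (hw : ∀ y, 0 ≤ w y) (y) : (P y + w y) ^ (-q) ≤ (P y) ^ (-q) :=
  Real.rpow_le_rpow_of_nonpos (hPpos y) (by linarith [hw y]) (by linarith)

lemma dens_pos (hPpos : ∀ x, 0 < P x) {w : EuclideanSpace ℝ (Fin 3) → ℝ}
    (hw : ∀ y, 0 ≤ w y) (y) : 0 < (P y + w y) ^ (-q) :=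
  Real.rpow_pos_of_pos (by linarith [hw y, hPpos y]) _

lemma dens_meas (hPcont : Continuous P) {w : EuclideanSpace ℝ (Fin 3) → ℝ}
    (hwm : Measurable w) : Measurable (fun y => (P y + w y) ^ (-q)) :=
  (hPcont.measurable.add hwm).pow_const _

lemma dens_int (hq : 0 < q) (hPcont : Continuous P) (hPpos : ∀ x, 0 < P x)
    (hi : Integrable (fun x => (P x) ^ (-q))) {w : EuclideanSpace ℝ (Fin 3) → ℝ}
    (hwm : Measurable w) (hw : ∀ y, 0 ≤ w y) : Integrable (fun y => (P y + w y) ^ (-q)) := by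
  refine hi.mono' (dens_meas hPcont hwm).aestronglyMeasurable (Eventually.of_forall fun y => ?_)
  rw [Real.norm_eq_abs, abs_of_pos (dens_pos hPpos hw y)]
  exact dens_le hq hPpos hw y

lemma kk_bound (hq : 0 < q) (hPpos : ∀ x, 0 < P x) {w : EuclideanSpace ℝ (Fin 3) → ℝ}
    (hw : ∀ y, 0 ≤ w y) (x y) : ‖kk x y * (P y + w y) ^ (-q)‖ ≤ ‖x‖ * (P y) ^ (-q) := by
  rw [norm_mul, Real.norm_eq_abs, Real.norm_eq_abs, abs_of_nonneg (kk_nonneg x y),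
    abs_of_pos (dens_pos hPpos hw y)]
  exact mul_le_mul (kk_le x y) (dens_le hq hPpos hw y) (dens_pos hPpos hw y).le (norm_nonneg _)

lemma kk_int (hq : 0 < q) (hPcont : Continuous P) (hPpos : ∀ x, 0 < P x)
    (hi : Integrable (fun x => (P x) ^ (-q))) {w : EuclideanSpace ℝ (Fin 3) → ℝ}
    (hwm : Measurable w) (hw : ∀ y, 0 ≤ w y) (x) :
    Integrable (fun y => kk x y * (P y + w y) ^ (-q)) := by
  refine (hi.const_mul ‖x‖).mono'
    ((kk_cont x).measurable.mul (dens_meas hPcont hwm)).aestronglyMeasurable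
    (Eventually.of_forall fun y => kk_bound hq hPpos hw x y)

lemma TT_nonneg (hPpos : ∀ x, 0 < P x) {w : EuclideanSpace ℝ (Fin 3) → ℝ}
    (hw : ∀ y, 0 ≤ w y) (x) : 0 ≤ TT q P w x := by
  unfold TT
  refine mul_nonneg (by positivity) (integral_nonneg fun y => ?_)
  exact mul_nonneg (kk_nonneg x y) (dens_pos hPpos hw y).le

lemma TT_lip (hq : 0 < q) (hPcont : Continuous P) (hPpos : ∀ x, 0 < P x)
    (hi : Integrable (fun x => (P x) ^ (-q))) {w : EuclideanSpace ℝ (Fin 3) → ℝ}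
    (hwm : Measurable w) (hw : ∀ y, 0 ≤ w y) (x x') :
    |TT q P w x - TT q P w x'| ≤ ((8 * π)⁻¹ * ∫ y, (P y) ^ (-q)) * ‖x - x'‖ := by
  unfold TT
  rw [← mul_sub, ← integral_sub (kk_int hq hPcont hPpos hi hwm hw x)
    (kk_int hq hPcont hPpos hi hwm hw x'), abs_mul, abs_of_pos (by positivity : 0 < (8 * π)⁻¹),
    mul_assoc]
  refine mul_le_mul_of_nonneg_left ?_ (by positivity)
  rw [← integral_mul_const, ← Real.norm_eq_abs]
  refine norm_integral_le_of_norm_le (hi.mul_const _) (Eventually.of_forall fun y => ?_)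
  rw [← sub_mul, norm_mul, Real.norm_eq_abs, Real.norm_eq_abs, abs_of_pos (dens_pos hPpos hw y),
    mul_comm]
  exact mul_le_mul (dens_le hq hPpos hw y) (kk_lip x x' y) (abs_nonneg _)
    (Real.rpow_nonneg (hPpos y).le _)

lemma TT_zero (w) : TT q P w 0 = 0 := by simp [TT, kk_zero]

lemma TT_neg (w x) : TT q P w (-x) = TT q P w x := by simp [TT, kk_neg]

lemma exists_approx (hq : 0 < q) (hPcont : Continuous P) (hPpos : ∀ x, 0 < P x)
    (hi : Integrable (fun x => (P x) ^ (-q)))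
    (s : SimpleFunc (EuclideanSpace ℝ (Fin 3)) (EuclideanSpace ℝ (Fin 3))) :
    ∃ w : EuclideanSpace ℝ (Fin 3) → ℝ, Measurable w ∧ (∀ y, 0 ≤ w y) ∧
      ∀ y, w y = TT q P w (s y) := by
  classical
  let A : EuclideanSpace ℝ s.range → EuclideanSpace ℝ (Fin 3) → ℝ :=
    fun a z => if h : z ∈ s.range then max 0 (a ⟨z, h⟩) else 0
  have hA0 : ∀ a z, 0 ≤ A a z := by
    intro a z; simp only [A]; split_ifs <;> simp
  let W : EuclideanSpace ℝ s.range → EuclideanSpace ℝ (Fin 3) → ℝ := fun a => s.map (A a)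
  have hW : ∀ a y, W a y = A a (s y) := fun a y => by simp [W]
  have hWm : ∀ a, Measurable (W a) := fun a => (s.map (A a)).measurable
  have hW0 : ∀ a y, 0 ≤ W a y := fun a y => by rw [hW]; exact hA0 _ _
  have hWc : ∀ y, Continuous fun a => W a y := by
    intro y
    have : (fun a => W a y) = fun a : EuclideanSpace ℝ s.range =>
        max 0 (a ⟨s y, s.mem_range_self y⟩) := by
      ext a; rw [hW]; simp only [A, dif_pos (s.mem_range_self y)]
    rw [this]; fun_prop
  let G : EuclideanSpace ℝ s.range → EuclideanSpace ℝ s.range :=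
    fun a => WithLp.toLp 2 fun i => TT q P (W a) i
  have hGc : Continuous G := by
    refine (PiLp.continuous_toLp 2 _).comp (continuous_pi fun i => ?_)
    unfold TT
    refine continuous_const.mul ?_
    refine continuous_of_dominated (bound := fun y => ‖(i : EuclideanSpace ℝ (Fin 3))‖ * P y ^ (-q)) ?_ ?_ ?_ ?_
    · intro a
      exact (kk_int hq hPcont hPpos hi (hWm a) (hW0 a) i).aestronglyMeasurable
    · intro a
      exact Eventually.of_forall fun y => kk_bound hq hPpos (hW0 a) i y
    · exact hi.const_mul _
    · refine Eventually.of_forall fun y => ?_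
      refine continuous_const.mul ?_
      refine (continuous_const.add (hWc y)).rpow_const fun a => Or.inl ?_
      exact (add_pos_of_pos_of_nonneg (hPpos y) (hW0 a y)).ne'
  set L := (8 * π)⁻¹ * ∫ y, (P y) ^ (-q) with hL
  have hK : IsCompact ((WithLp.toLp 2) '' (Set.univ.pi fun i : s.range =>
      Set.Icc (0:ℝ) (L * ‖(i : EuclideanSpace ℝ (Fin 3))‖))) :=
    (isCompact_univ_pi fun i => isCompact_Icc).image (PiLp.continuous_toLp 2 _)
  obtain ⟨R, hR⟩ := hK.isBounded.exists_norm_le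
  obtain ⟨a, ha⟩ := brouwer (R := R) hGc (by
    intro a
    refine hR _ ⟨_, fun i _ => ⟨TT_nonneg hPpos (hW0 a) i, ?_⟩, rfl⟩
    have := TT_lip hq hPcont hPpos hi (hWm a) (hW0 a) i 0
    rw [TT_zero, sub_zero, sub_zero] at this
    exact (le_abs_self _).trans this)
  refine ⟨W a, hWm a, hW0 a, fun y => ?_⟩
  rw [hW]
  simp only [A, dif_pos (s.mem_range_self y)]
  have h1 : a ⟨s y, s.mem_range_self y⟩ = TT q P (W a) (s y) := by
    conv_lhs => rw [← ha]
  rw [h1]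
  exact max_eq_right (TT_nonneg hPpos (hW0 a) _)

end

lemma exists_lim {L : ℝ} {v : ℕ → EuclideanSpace ℝ (Fin 3) → ℝ}
    (hv : ∀ n x x', |v n x - v n x'| ≤ L * ‖x - x'‖) (hv0 : ∀ n, v n 0 = 0) :
    ∃ (φ : ℕ → ℕ) (u : EuclideanSpace ℝ (Fin 3) → ℝ), StrictMono φ ∧
      ∀ x, Tendsto (fun n => v (φ n) x) atTop (𝓝 (u x)) := by
  let d := TopologicalSpace.denseSeq (EuclideanSpace ℝ (Fin 3))
  have hd : DenseRange d := TopologicalSpace.denseRange_denseSeq _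
  have hL : 0 ≤ L := by
    obtain ⟨e, he⟩ := exists_norm_eq (EuclideanSpace ℝ (Fin 3)) (zero_le_one)
    have := (abs_nonneg _).trans (hv 0 e 0)
    simpa [he] using this
  have hK : IsCompact (Set.univ.pi fun k : ℕ => Set.Icc (-(L * ‖d k‖)) (L * ‖d k‖)) :=
    isCompact_univ_pi fun i => isCompact_Icc
  obtain ⟨a, -, φ, hφ, hlim⟩ := hK.tendsto_subseq (x := fun n k => v n (d k)) (by
    intro n k _
    have := hv n (d k) 0
    rw [hv0, sub_zero, sub_zero] at this
    exact abs_le.1 this)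
  have hlim' : ∀ k, Tendsto (fun n => v (φ n) (d k)) atTop (𝓝 (a k)) :=
    fun k => (tendsto_pi_nhds.1 hlim) k
  have hc : ∀ x, CauchySeq fun n => v (φ n) x := by
    intro x
    rw [Metric.cauchySeq_iff]
    intro ε hε
    obtain ⟨k, hk⟩ := hd.exists_dist_lt x (show 0 < ε / (4 * (L + 1)) by positivity)
    rw [lt_div_iff₀ (by positivity), dist_eq_norm] at hk
    obtain ⟨N, hN⟩ := Metric.cauchySeq_iff.1 (hlim' k).cauchySeq (ε / 2) (by positivity)
    refine ⟨N, fun m hm n hn => ?_⟩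
    have h1 := hN m hm n hn
    have h2 := hv (φ m) x (d k)
    have h3 := hv (φ n) x (d k)
    rw [Real.dist_eq] at *
    have h4 : L * ‖x - d k‖ < ε / 4 := by nlinarith [norm_nonneg (x - d k)]
    rw [abs_lt] at *
    rw [abs_le] at *
    constructor <;> linarith [h1.1, h1.2, h2.1, h2.2, h3.1, h3.2]
  choose u hu using fun x => cauchySeq_tendsto_of_complete (hc x)
  exact ⟨φ, u, hφ, hu⟩

theorem exists_even_solution_integral_equation
    (q : ℝ) (hq : 0 < q) (P : EuclideanSpace ℝ (Fin 3) → ℝ)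
    (hPcont : Continuous P) (hPpos : ∀ x, 0 < P x) (hPeven : ∀ x, P (-x) = P x)
    (hPint : Integrable (fun x => ‖x‖ * (P x) ^ (-q))) :
    ∃ v : EuclideanSpace ℝ (Fin 3) → ℝ,
      Continuous v ∧
      (∀ x, v (-x) = v x) ∧
      (∃ C : ℝ, ∀ x, |v x| ≤ C * (1 + ‖x‖)) ∧
      v 0 = 0 ∧ (∀ x, 0 ≤ v x) ∧
      Integrable (fun y => (P y + v y) ^ (-q)) ∧
      (∀ x, Integrable (fun y => (‖x - y‖ - ‖y‖) * (P y + v y) ^ (-q))) ∧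
      (∀ x, v x = (8 * π)⁻¹ * ∫ y, (‖x - y‖ - ‖y‖) * (P y + v y) ^ (-q)) ∧
      Tendsto (fun x => v x / ‖x‖) (cocompact (EuclideanSpace ℝ (Fin 3)))
        (𝓝 ((8 * π)⁻¹ * ∫ y, (P y + v y) ^ (-q))) := by
  have hi := int_P hPcont hPpos hPint
  set L := (8 * π)⁻¹ * ∫ y, (P y) ^ (-q) with hL
  have hL0 : 0 ≤ L := mul_nonneg (by positivity)
    (integral_nonneg fun y => Real.rpow_nonneg (hPpos y).le _)
  let s : ℕ → SimpleFunc (EuclideanSpace ℝ (Fin 3)) (EuclideanSpace ℝ (Fin 3)) :=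
    fun n => SimpleFunc.approxOn id measurable_id Set.univ 0 (Set.mem_univ _) n
  have hs : ∀ y, Tendsto (fun n => s n y) atTop (𝓝 y) := fun y =>
    SimpleFunc.tendsto_approxOn measurable_id (Set.mem_univ _) (by simp)
  choose w hwm hw0 hw using fun n => exists_approx hq hPcont hPpos hi (s n)
  have hlip : ∀ n x x', |TT q P (w n) x - TT q P (w n) x'| ≤ L * ‖x - x'‖ := fun n =>
    TT_lip hq hPcont hPpos hi (hwm n) (hw0 n)
  obtain ⟨φ, v, hφ, hv⟩ := exists_lim hlip (fun n => TT_zero _)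
  have hvlip : ∀ x x', |v x - v x'| ≤ L * ‖x - x'‖ := fun x x' =>
    le_of_tendsto ((hv x).sub (hv x')).abs (Eventually.of_forall fun n => hlip _ x x')
  have hvc : Continuous v := by
    refine (LipschitzWith.of_dist_le_mul (K := ⟨L, hL0⟩) fun x x' => ?_).continuous
    rw [Real.dist_eq, dist_eq_norm]; exact hvlip x x'
  have hv0 : ∀ x, 0 ≤ v x := fun x =>
    ge_of_tendsto (hv x) (Eventually.of_forall fun n => TT_nonneg hPpos (hw0 _) x)
  have hvz : v 0 = 0 := by
    refine tendsto_nhds_unique (hv 0) ?_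
    simp only [TT_zero]; exact tendsto_const_nhds
  have hvn : ∀ x, v (-x) = v x := by
    intro x
    refine tendsto_nhds_unique (hv (-x)) ?_
    simp only [TT_neg]; exact hv x
  have hwlim : ∀ y, Tendsto (fun n => w (φ n) y) atTop (𝓝 (v y)) := by
    intro y
    have h1 : Tendsto (fun n => TT q P (w (φ n)) (s (φ n) y) - TT q P (w (φ n)) y) atTop (𝓝 0) := by
      have h2 : Tendsto (fun n => L * ‖s (φ n) y - y‖) atTop (𝓝 0) := by
        have := (((hs y).comp hφ.tendsto_atTop).sub_const y).norm.const_mul L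
        simpa using this
      exact squeeze_zero_norm (fun n => hlip _ _ _) h2
    have := h1.add (hv y)
    simp only [sub_add_cancel, zero_add] at this
    exact this.congr fun n => (hw _ y).symm
  have hfix : ∀ x, v x = TT q P v x := by
    intro x
    refine tendsto_nhds_unique (hv x) ?_
    unfold TT
    refine Tendsto.const_mul _ ?_
    refine tendsto_integral_of_dominated_convergence (fun y => ‖x‖ * P y ^ (-q)) ?_
      (hi.const_mul _) ?_ ?_
    · intro n
      exact (kk_int hq hPcont hPpos hi (hwm _) (hw0 _) x).aestronglyMeasurable
    · intro n
      exact Eventually.of_forall fun y => kk_bound hq hPpos (hw0 _) x y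
    · refine Eventually.of_forall fun y => Tendsto.const_mul _ ?_
      exact ((hwlim y).const_add (P y)).rpow_const (Or.inl (by linarith [hPpos y, hv0 y]))
  have hfi := dens_int hq hPcont hPpos hi hvc.measurable hv0
  have hki : ∀ x, Integrable (fun y => (‖x - y‖ - ‖y‖) * (P y + v y) ^ (-q)) := by
    intro x
    refine (hfi.const_mul ‖x‖).mono' ?_ (Eventually.of_forall fun y => ?_)
    · exact ((by fun_prop : Continuous fun y => ‖x - y‖ - ‖y‖).measurable.mul
        (dens_meas hPcont hvc.measurable)).aestronglyMeasurable
    · rw [norm_mul, Real.norm_of_nonneg (dens_pos hPpos hv0 y).le]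
      refine mul_le_mul_of_nonneg_right ?_ (dens_pos hPpos hv0 y).le
      have := abs_norm_sub_norm_le (x - y) (-y)
      rwa [norm_neg, sub_neg_eq_add, sub_add_cancel] at this
  have heq : ∀ x, v x = (8 * π)⁻¹ * ∫ y, (‖x - y‖ - ‖y‖) * (P y + v y) ^ (-q) := by
    intro x
    rw [hfix x]
    unfold TT
    congr 1
    have hsymm : ∫ y, (‖x + y‖ - ‖y‖) * (P y + v y) ^ (-q) =
        ∫ y, (‖x - y‖ - ‖y‖) * (P y + v y) ^ (-q) := by
      rw [← integral_neg_eq_self]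
      simp only [norm_neg, hPeven, hvn, ← sub_eq_add_neg]
    have hki2 : Integrable (fun y => (‖x + y‖ - ‖y‖) * (P y + v y) ^ (-q)) := by
      have := (hki x).comp_neg
      simpa only [norm_neg, hPeven, hvn, sub_neg_eq_add] using this
    have : ∀ y, kk x y * (P y + v y) ^ (-q) = (1/2) * ((‖x - y‖ - ‖y‖) * (P y + v y) ^ (-q))
        + (1/2) * ((‖x + y‖ - ‖y‖) * (P y + v y) ^ (-q)) := by
      intro y; unfold kk; ring
    simp only [this]
    rw [integral_add ((hki x).const_mul _) (hki2.const_mul _), integral_const_mul,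
      integral_const_mul, hsymm]
    ring
  refine ⟨v, hvc, hvn, ⟨L, fun x => ?_⟩, hvz, hv0, hfi, hki, heq, ?_⟩
  · have := hvlip x 0
    rw [hvz, sub_zero, sub_zero] at this
    nlinarith
  · have h1 : ∀ x, v x / ‖x‖ = (8 * π)⁻¹ * ∫ y, kk x y / ‖x‖ * (P y + v y) ^ (-q) := by
      intro x
      rw [hfix x]
      unfold TT
      rw [mul_div_assoc, ← integral_div]
      simp only [div_mul_eq_mul_div]
    simp only [h1]
    refine Tendsto.const_mul _ ?_
    rw [← Metric.cobounded_eq_cocompact, ← comap_norm_atTop]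
    refine tendsto_integral_filter_of_dominated_convergence (fun y => (P y + v y) ^ (-q)) ?_ ?_ hfi ?_
    · refine Eventually.of_forall fun x => ?_
      exact (((kk_cont x).div_const _).measurable.mul
        (dens_meas hPcont hvc.measurable)).aestronglyMeasurable
    · refine Eventually.of_forall fun x => Eventually.of_forall fun y => ?_
      rw [norm_mul, Real.norm_of_nonneg (dens_pos hPpos hv0 y).le]
      refine mul_le_of_le_one_left (dens_pos hPpos hv0 y).le ?_
      rw [Real.norm_of_nonneg (div_nonneg (kk_nonneg _ _) (norm_nonneg _))]
      exact div_le_one_of_le₀ (kk_le x y) (norm_nonneg _)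
    · refine Eventually.of_forall fun y => ?_
      have hnorm : Tendsto (fun x : EuclideanSpace ℝ (Fin 3) => ‖x‖) (comap norm atTop) atTop :=
        tendsto_comap
      have h2 : Tendsto (fun x => kk x y / ‖x‖) (comap norm atTop) (𝓝 1) := by
        have h3 : Tendsto (fun x : EuclideanSpace ℝ (Fin 3) => 1 - 2 * ‖y‖ / ‖x‖)
            (comap norm atTop) (𝓝 1) := by
          have := (hnorm.const_div_atTop (2 * ‖y‖)).const_sub 1
          simpa using this
        refine tendsto_of_tendsto_of_tendsto_of_le_of_le' h3 tendsto_const_nhds ?_ ?_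
        · filter_upwards [hnorm.eventually_gt_atTop 0] with x hx
          rw [le_div_iff₀ hx, sub_mul, one_mul, div_mul_cancel₀ _ hx.ne']
          have a1 := norm_sub_norm_le x y
          have a2 := norm_sub_norm_le x (-y)
          rw [norm_neg, sub_neg_eq_add] at a2
          unfold kk; linarith
        · exact Eventually.of_forall fun x => div_le_one_of_le₀ (kk_le x y) (norm_nonneg _)
      have := h2.mul_const ((P y + v y) ^ (-q))
      rwa [one_mul] at this
end

section
/- Let q > 0 and let P : ℝ³ → (0, ∞) be a continuous radially symmetric function (P(x) depends only on |x|) with ∫_{ℝ³} |x| P(x)^{−q} dx < ∞. Then there exists a continuous radially symmetric function v : ℝ³ → ℝ with sup_{x∈ℝ³} |v(x)|/(1+|x|) < ∞, min_{ℝ³} v = v(0) = 0, satisfying v(x) = (1/8π)∫_{ℝ³} (|x−y| − |y|) (P(y) + v(y))^{−q} dy for all x ∈ ℝ³, and lim_{|x|→∞} v(x)/|x| = (1/8π)∫_{ℝ³} (P(y) + v(y))^{−q} dy. -/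
open MeasureTheory Filter Topology Real

abbrev E3 := EuclideanSpace ℝ (Fin 3)

lemma aux_change (z : ℝ) (F : ℝ → ENNReal) :
    ∫⁻ r in Set.Ioi (0:ℝ), ENNReal.ofReal r * F (√(z^2 + r^2)) =
    ∫⁻ s in Set.Ioi |z|, ENNReal.ofReal s * F s := by
  have him : (fun r : ℝ => √(z^2 + r^2)) '' Set.Ioi 0 = Set.Ioi |z| := by
    ext s
    simp only [Set.mem_image, Set.mem_Ioi]
    constructor
    · rintro ⟨r, hr, rfl⟩
      rw [← Real.sqrt_sq_eq_abs]
      exact Real.sqrt_lt_sqrt (sq_nonneg _) (by nlinarith)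
    · intro hs
      have h0 := abs_nonneg z
      have h1 : z^2 < s^2 := by rw [← sq_abs z]; nlinarith
      refine ⟨√(s^2 - z^2), Real.sqrt_pos.2 (by linarith), ?_⟩
      rw [Real.sq_sqrt (by linarith)]
      rw [add_sub_cancel, Real.sqrt_sq (by linarith)]
  have hinj : Set.InjOn (fun r : ℝ => √(z^2 + r^2)) (Set.Ioi 0) := by
    intro a ha b hb hab
    simp only [Set.mem_Ioi] at ha hb
    have := (Real.sqrt_inj (by positivity) (by positivity)).1 hab
    have : a^2 = b^2 := by linarith
    exact (pow_left_inj₀ ha.le hb.le two_ne_zero).1 this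
  have hd : ∀ r ∈ Set.Ioi (0:ℝ), HasDerivWithinAt (fun r : ℝ => √(z^2 + r^2))
      (r / √(z^2 + r^2)) (Set.Ioi 0) r := by
    intro r hr
    simp only [Set.mem_Ioi] at hr
    have h := (((hasDerivAt_pow 2 r).const_add (z^2)).sqrt (by positivity)).hasDerivWithinAt (s := Set.Ioi 0)
    have heq : r / √(z^2 + r^2) = ((2:ℕ):ℝ) * r ^ (2 - 1) / (2 * √(z ^ 2 + r ^ 2)) := by
      have : √(z^2+r^2) ≠ 0 := (Real.sqrt_pos.2 (by positivity)).ne'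
      push_cast
      field_simp
    rw [heq]
    exact h
  rw [← him, lintegral_image_eq_lintegral_abs_deriv_mul measurableSet_Ioi hd hinj]
  refine setLIntegral_congr_fun measurableSet_Ioi ?_
  intro r hr
  simp only [Set.mem_Ioi] at hr
  have hp : 0 < √(z^2+r^2) := Real.sqrt_pos.2 (by positivity)
  simp only
  rw [← mul_assoc, ← ENNReal.ofReal_mul (abs_nonneg _), abs_of_pos (by positivity)]
  congr 2
  field_simp

lemma aux_polar (F : ℝ → ENNReal) (hF : Measurable F) :
    ∫⁻ p : ℝ × ℝ, F (p.1^2 + p.2^2) =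
      ENNReal.ofReal (2*π) * ∫⁻ r in Set.Ioi (0:ℝ), ENNReal.ofReal r * F (r^2) := by
  rw [← lintegral_comp_polarCoord_symm]
  have : ∀ p : ℝ × ℝ, ENNReal.ofReal p.1 • F ((polarCoord.symm p).1^2 + (polarCoord.symm p).2^2)
     = ENNReal.ofReal p.1 * F (p.1^2) := by
    intro p
    simp only [polarCoord_symm_apply, smul_eq_mul]
    congr 2
    have := Real.sin_sq_add_cos_sq p.2
    linear_combination p.1^2 * this
  simp_rw [this]
  rw [polarCoord_target, Measure.volume_eq_prod, ← Measure.prod_restrict, lintegral_prod]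
  · simp only [lintegral_const]
    rw [lintegral_mul_const]
    · rw [mul_comm]
      congr 1
      simp only [MeasurableSet.univ, Measure.restrict_apply, Set.univ_inter, Real.volume_Ioo]
      ring_nf
    · fun_prop
  · fun_prop

lemma aux_lint (F : ℝ × ℝ → ENNReal) (hF : Measurable F) :
    ∫⁻ y : E3, F (y 0, ‖y‖) =
      ∫⁻ z : ℝ, ENNReal.ofReal (2*π) * ∫⁻ s in Set.Ioi |z|, ENNReal.ofReal s * F (z, s) := by
  have hn : ∀ y : E3, ‖y‖ = √(y 0 ^ 2 + (y 1 ^2 + y 2^2)) := by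
    intro y; rw [EuclideanSpace.norm_eq, Fin.sum_univ_three]; simp [add_assoc]
  simp_rw [hn]
  have e1 := (PiLp.volume_preserving_ofLp (Fin 3)).lintegral_comp
    (f := fun y : Fin 3 → ℝ => F (y 0, √(y 0 ^ 2 + (y 1 ^2 + y 2^2)))) (by fun_prop)
  rw [e1]
  have e2 := (volume_preserving_piFinSuccAbove (fun _ : Fin 3 => ℝ) 0).lintegral_comp
    (f := fun p : ℝ × (Fin 2 → ℝ) => F (p.1, √(p.1 ^ 2 + (p.2 0 ^2 + p.2 1^2)))) (by fun_prop)
  have e2' : ∫⁻ y : Fin 3 → ℝ, F (y 0, √(y 0 ^ 2 + (y 1 ^2 + y 2^2))) = 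
    ∫⁻ p : ℝ × (Fin 2 → ℝ), F (p.1, √(p.1 ^ 2 + (p.2 0 ^2 + p.2 1^2))) := by
    rw [← e2]; rfl
  rw [e2', Measure.volume_eq_prod, lintegral_prod _ (by fun_prop)]
  refine lintegral_congr fun z => ?_
  have e3 := (volume_preserving_finTwoArrow ℝ).lintegral_comp
    (f := fun p : ℝ × ℝ => F (z, √(z ^ 2 + (p.1 ^2 + p.2^2)))) (by fun_prop)
  have e3' : ∫⁻ y : Fin 2 → ℝ, F (z, √(z ^ 2 + (y 0 ^2 + y 1^2))) = 
    ∫⁻ p : ℝ × ℝ, F (z, √(z ^ 2 + (p.1 ^2 + p.2^2))) := by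
    rw [← e3]; rfl
  simp only
  rw [e3', aux_polar (fun t => F (z, √(z^2 + t))) (by fun_prop), aux_change z (fun s => F (z, s))]

noncomputable def dens : ℝ × ℝ → ENNReal :=
  Set.indicator {p | |p.1| < p.2} (fun p => ENNReal.ofReal (2*π*p.2))

lemma meas_dens : Measurable dens := by
  unfold dens
  refine Measurable.indicator (by fun_prop) ?_
  exact measurableSet_lt (by fun_prop) (by fun_prop)

lemma dens_lt (p : ℝ × ℝ) : dens p < ⊤ := by
  unfold dens Set.indicator
  split_ifs <;> simp

lemma map_eq : Measure.map (fun y : E3 => (y 0, ‖y‖)) volume =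
    (volume : Measure (ℝ × ℝ)).withDensity dens := by
  have hm : Measurable (fun y : E3 => (y 0, ‖y‖)) := by fun_prop
  refine Measure.ext_of_lintegral _ fun F hF => ?_
  rw [lintegral_map hF hm, aux_lint F hF, lintegral_withDensity_eq_lintegral_mul _ meas_dens hF,
    Measure.volume_eq_prod, lintegral_prod _ (by have := meas_dens; fun_prop)]
  refine lintegral_congr fun z => ?_
  rw [← lintegral_const_mul' _ _ ENNReal.ofReal_ne_top, ← lintegral_indicator measurableSet_Ioi]
  refine lintegral_congr fun s => ?_
  simp only [dens, Set.indicator, Set.mem_Ioi, Set.mem_ofPred_eq, Pi.mul_apply]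
  split_ifs
  · rw [← mul_assoc, ENNReal.ofReal_mul (p := 2*π) (by positivity)]
  · simp

lemma inner_int (r s : ℝ) (hr : 0 < r) (hs : 0 < s) :
    ∫ z in (-s)..s, (√(r^2 - 2*r*z + s^2) - s) =
      2*r^2/3 - 2*(max (r-s) 0)^3/(3*r) := by
  have hi : ∫ z in (-s)..s, √(r^2 - 2*r*z + s^2) = ((r+s)^3 - |r-s|^3)/(3*r) := by
    have hd : ∀ z ∈ Set.Ioo (-s) s, HasDerivAt (fun z => -(√(r^2 - 2*r*z + s^2))^3/(3*r))
        (√(r^2 - 2*r*z + s^2)) z := by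
      intro z hz
      have hpos : 0 < r^2 - 2*r*z + s^2 := by nlinarith [sq_nonneg (r-s), hz.2]
      have h1 : HasDerivAt (fun z => r^2 - 2*r*z + s^2) (-(2*r)) z := by
        have := (((hasDerivAt_id z).const_mul (2*r)).const_sub (r^2)).add_const (s^2)
        simpa using this
      have h2 := ((h1.sqrt hpos.ne').pow 3).neg.div_const (3*r)
      have : √(r^2 - 2*r*z + s^2) ≠ 0 := (Real.sqrt_pos.2 hpos).ne'
      have heq : √(r ^ 2 - 2 * r * z + s ^ 2) = -(((3:ℕ):ℝ) * √(r ^ 2 - 2 * r * z + s ^ 2) ^ (3 - 1) * (-(2 * r) / (2 * √(r ^ 2 - 2 * r * z + s ^ 2)))) / (3 * r) := by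
        push_cast
        field_simp
      rw [← heq] at h2
      exact h2
    rw [intervalIntegral.integral_eq_sub_of_hasDerivAt_of_le (by linarith) (by fun_prop) hd
      (Continuous.intervalIntegrable (by fun_prop) _ _)]
    rw [show r^2 - 2*r*s + s^2 = (r-s)^2 by ring, show r^2 - 2*r*(-s) + s^2 = (r+s)^2 by ring,
      Real.sqrt_sq_eq_abs, Real.sqrt_sq (by positivity)]
    ring
  rw [intervalIntegral.integral_sub (Continuous.intervalIntegrable (by fun_prop) _ _) (by simp), hi]
  simp only [intervalIntegral.integral_const, smul_eq_mul]
  rcases le_total s r with h | h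
  · rw [abs_of_nonneg (by linarith), max_eq_left (by linarith)]
    field_simp; ring
  · rw [abs_of_nonpos (by linarith), max_eq_right (by linarith)]
    field_simp; ring

lemma integrable_ker {g : E3 → ℝ} (hg : Integrable g) (x : E3) :
    Integrable (fun y => (‖x - y‖ - ‖y‖) * g y) := by
  refine (hg.norm.const_mul ‖x‖).mono' ?_ ?_
  · exact (Continuous.aestronglyMeasurable (by fun_prop)).mul hg.1
  · refine ae_of_all _ fun y => ?_
    rw [norm_mul]
    gcongr
    have := abs_norm_sub_norm_le (x - y) (-y)
    simpa using this

/-- main geometric formula -/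
lemma radial_formula (f : ℝ → ℝ) (hf : Measurable f) (hint : Integrable (fun y : E3 => f ‖y‖))
    (x : E3) (hx : x ≠ 0) :
    ∫ y, (‖x - y‖ - ‖y‖) * f ‖y‖ = 2*π * ∫ s in Set.Ioi (0:ℝ),
      s * f s * (2*‖x‖^2/3 - 2*(max (‖x‖-s) 0)^3/(3*‖x‖)) := by
  set r := ‖x‖ with hr
  have hr0 : 0 < r := norm_pos_iff.2 hx
  set e : E3 := EuclideanSpace.single 0 r with he
  have hne : ‖x‖ = ‖e‖ := by simp [he, ← hr, abs_of_pos hr0]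
  set R := (Submodule.span ℝ {x - e})ᗮ.reflection with hR
  have hRx : R x = e := Submodule.reflection_sub hne
  have h1 : ∫ y, (‖x - y‖ - ‖y‖) * f ‖y‖ = ∫ y, (‖e - y‖ - ‖y‖) * f ‖y‖ := by
    rw [← (R.measurePreserving).integral_comp' (f := R.toMeasurableEquiv) (g := fun y => (‖e - y‖ - ‖y‖) * f ‖y‖)]
    refine integral_congr_ae (ae_of_all _ fun y => ?_)
    simp only [LinearIsometryEquiv.coe_toMeasurableEquiv, LinearIsometryEquiv.norm_map]
    rw [← hRx, ← map_sub, LinearIsometryEquiv.norm_map]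
  rw [h1]
  have hfun : ∀ y : E3, ‖e - y‖ = √(r^2 - 2*r*(y 0) + ‖y‖^2) := by
    intro y
    rw [EuclideanSpace.norm_eq, EuclideanSpace.norm_sq_eq y, Fin.sum_univ_three, Fin.sum_univ_three]
    congr 1
    simp [he]
    ring
  set F : ℝ × ℝ → ℝ := fun p => (√(r^2 - 2*r*p.1 + p.2^2) - p.2) * f p.2 with hF
  have hFm : Measurable F := by fun_prop
  have hm : Measurable (fun y : E3 => (y 0, ‖y‖)) := by fun_prop
  have hcomp : ∀ y : E3, (‖e - y‖ - ‖y‖) * f ‖y‖ = F (y 0, ‖y‖) := by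
    intro y; simp only [hF, hfun]
  have hi := integrable_ker hint e
  simp_rw [hcomp] at hi ⊢
  have hi2 : Integrable F (Measure.map (fun y : E3 => (y 0, ‖y‖)) volume) :=
    (integrable_map_measure hFm.aestronglyMeasurable hm.aemeasurable).2 hi
  rw [← integral_map hm.aemeasurable hFm.aestronglyMeasurable]
  rw [map_eq] at hi2 ⊢
  rw [integrable_withDensity_iff_integrable_smul' meas_dens (ae_of_all _ dens_lt)] at hi2
  rw [integral_withDensity_eq_integral_toReal_smul meas_dens (ae_of_all _ dens_lt)]
  rw [Measure.volume_eq_prod] at hi2 ⊢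
  rw [integral_prod_symm _ hi2, ← integral_const_mul, ← integral_indicator measurableSet_Ioi]
  refine integral_congr_ae (ae_of_all _ fun s => ?_)
  simp only
  by_cases hs : 0 < s
  · rw [Set.indicator_of_mem (by exact hs), ← inner_int r s hr0 hs,
      intervalIntegral.integral_of_le (by linarith), integral_Ioc_eq_integral_Ioo,
      ← integral_indicator measurableSet_Ioo, ← integral_const_mul, ← integral_const_mul]
    refine integral_congr_ae (ae_of_all _ fun z => ?_)
    simp only [dens, Set.indicator, Set.mem_ofPred_eq, Set.mem_Ioo, ← abs_lt, hF]
    split_ifs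
    · rw [ENNReal.toReal_ofReal (by positivity), smul_eq_mul]; ring
    · simp
  · rw [Set.indicator_of_notMem (by exact hs)]
    refine integral_eq_zero_of_ae (ae_of_all _ fun z => ?_)
    have : ¬ |z| < s := fun h => hs (lt_of_le_of_lt (abs_nonneg z) h)
    simp [dens, Set.indicator, this]

noncomputable def pic (G : ℝ → ℝ → ℝ) : ℕ → ℝ × ℝ → ℝ
  | 0 => fun _ => 0
  | n+1 => fun p => p.1*p.2^2/6 -
      p.2^4/6 * ∫ θ in (0:ℝ)..1, (1-θ)^3*θ*G (p.2*θ) (pic G n (p.1, p.2*θ))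

lemma pic_cont (G : ℝ → ℝ → ℝ) (hG : Continuous (Function.uncurry G)) (n : ℕ) :
    Continuous (pic G n) := by
  induction n with
  | zero => exact continuous_const
  | succ n ih =>
    unfold pic
    have : Continuous (fun p : ℝ × ℝ =>
        ∫ θ in (0:ℝ)..1, (1-θ)^3*θ*G (p.2*θ) (pic G n (p.1, p.2*θ))) := by
      refine intervalIntegral.continuous_parametric_intervalIntegral_of_continuous' ?_ 0 1
      have h2 : Continuous (fun a : (ℝ × ℝ) × ℝ => Function.uncurry G (a.1.2*a.2, pic G n (a.1.1, a.1.2*a.2))) := by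
        fun_prop
      simp only [Function.uncurry] at h2 ⊢
      fun_prop
    fun_prop

lemma pic_bound (G : ℝ → ℝ → ℝ) (hG : Continuous (Function.uncurry G)) (R L A : ℝ) (hR : 0 ≤ R)
    (hL0 : 0 ≤ L) (hL : ∀ s, |s| ≤ R → ∀ t t', |G s t - G s t'| ≤ L * |t - t'|)
    (hA : ∀ p : ℝ × ℝ, |p.1| ≤ R → |p.2| ≤ R → |pic G 1 p| ≤ A) (n : ℕ) :
    ∀ p : ℝ × ℝ, |p.1| ≤ R → |p.2| ≤ R →
      |pic G (n+1) p - pic G n p| ≤ A * ((R^3*L*|p.2|)^n / n.factorial) := by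
  have hA0 : 0 ≤ A := (abs_nonneg _).trans (hA (0,0) (by simpa) (by simpa))
  induction n with
  | zero =>
    intro p h1 h2
    simpa [pic] using hA p h1 h2
  | succ n ih =>
    intro p h1 h2
    have hc : ∀ m, Continuous (fun θ : ℝ => (1-θ)^3*θ*G (p.2*θ) (pic G m (p.1, p.2*θ))) := by
      intro m
      have := pic_cont G hG m
      have h2 : Continuous (fun θ : ℝ => Function.uncurry G (p.2*θ, pic G m (p.1, p.2*θ))) := by
        fun_prop
      simp only [Function.uncurry] at h2
      fun_prop
    have e : pic G (n+1+1) p - pic G (n+1) p = - (p.2^4/6 *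
       ∫ θ in (0:ℝ)..1, ((1-θ)^3*θ*G (p.2*θ) (pic G (n+1) (p.1, p.2*θ)) -
          (1-θ)^3*θ*G (p.2*θ) (pic G n (p.1, p.2*θ)))) := by
      rw [intervalIntegral.integral_sub ((hc _).intervalIntegrable _ _) ((hc _).intervalIntegrable _ _)]
      rw [pic.eq_2 G (n+1), pic.eq_2 G n]
      ring
    have hb : ‖∫ θ in (0:ℝ)..1, ((1-θ)^3*θ*G (p.2*θ) (pic G (n+1) (p.1, p.2*θ)) -
          (1-θ)^3*θ*G (p.2*θ) (pic G n (p.1, p.2*θ)))‖ ≤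
        ∫ θ in (0:ℝ)..1, (L * (A * ((R^3*L*|p.2|)^n / n.factorial))) * θ^n := by
      refine intervalIntegral.norm_integral_le_of_norm_le zero_le_one ?_
        (Continuous.intervalIntegrable (by fun_prop) _ _)
      refine ae_of_all _ fun θ hθ => ?_
      obtain ⟨h0, h1'⟩ := hθ
      have hle : |p.2*θ| ≤ R := by
        rw [abs_mul, abs_of_pos h0]
        nlinarith [abs_nonneg p.2]
      have i1 := hL (p.2*θ) hle (pic G (n+1) (p.1, p.2*θ)) (pic G n (p.1, p.2*θ))
      have i2 := ih (p.1, p.2*θ) h1 hle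
      simp only at i2
      rw [← mul_sub, norm_mul, Real.norm_eq_abs, Real.norm_eq_abs]
      have i3 : |(1-θ)^3*θ| ≤ 1 := by
        rw [abs_of_nonneg (mul_nonneg (pow_nonneg (by linarith) 3) h0.le)]
        exact mul_le_one₀ (pow_le_one₀ (by linarith) (by linarith)) h0.le h1'
      calc _ ≤ 1 * (L * (A * ((R^3*L*|p.2*θ|)^n / n.factorial))) := by
            gcongr
            exact i1.trans (by gcongr)
        _ = _ := by
            rw [abs_mul, abs_of_pos h0, ← mul_assoc (R^3*L), mul_pow _ θ]; ring
    rw [intervalIntegral.integral_const_mul, integral_pow] at hb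
    rw [e, abs_neg, abs_mul, ← Real.norm_eq_abs (∫ θ in (0:ℝ)..1, _)]
    have hr4 : |p.2^4/6| ≤ R^3 * |p.2| := by
      rw [abs_div, abs_pow]
      have : |p.2|^3 ≤ R^3 := pow_le_pow_left₀ (abs_nonneg _) h2 3
      have h6 : |(6:ℝ)| = 6 := by norm_num
      rw [h6]
      have := mul_le_mul_of_nonneg_right this (abs_nonneg p.2)
      have h7 : 0 ≤ |p.2|^4 := by positivity
      nlinarith
    calc _ ≤ (R^3 * |p.2|) * _ := mul_le_mul hr4 hb (norm_nonneg _) (by positivity)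
      _ = _ := by
        rw [Nat.factorial_succ]
        push_cast
        have : (n.factorial : ℝ) ≠ 0 := by positivity
        field_simp
        simp
        try ring

lemma picard (G : ℝ → ℝ → ℝ) (hG : Continuous (Function.uncurry G)) (M : ℝ → ℝ) (hM : Continuous M)
    (hGM : ∀ s t, |G s t| ≤ M s)
    (hL : ∀ R : ℝ, ∃ L, 0 ≤ L ∧ ∀ s, |s| ≤ R → ∀ t t', |G s t - G s t'| ≤ L * |t - t'|) :
    ∃ v : ℝ × ℝ → ℝ, Continuous v ∧ ∀ p, v p = p.1*p.2^2/6 -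
      p.2^4/6 * ∫ θ in (0:ℝ)..1, (1-θ)^3*θ*G (p.2*θ) (v (p.1, p.2*θ)) := by
  have key : ∀ R : ℝ, 0 ≤ R → ∃ u : ℕ → ℝ, Summable u ∧ ∀ n, ∀ p ∈ Metric.closedBall (0 : ℝ × ℝ) R,
      ‖pic G (n+1) p - pic G n p‖ ≤ u n := by
    intro R hR
    obtain ⟨L, hL0, hL⟩ := hL R
    obtain ⟨A, hA⟩ := (isCompact_closedBall (0 : ℝ × ℝ) R).exists_bound_of_continuousOn
      (pic_cont G hG 1).continuousOn
    have hmem : ∀ p : ℝ × ℝ, p ∈ Metric.closedBall (0 : ℝ × ℝ) R ↔ |p.1| ≤ R ∧ |p.2| ≤ R := by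
      intro p
      rw [mem_closedBall_zero_iff, Prod.norm_def, max_le_iff]; rfl
    have hA' : ∀ p : ℝ × ℝ, |p.1| ≤ R → |p.2| ≤ R → |pic G 1 p| ≤ A :=
      fun p h1 h2 => hA p ((hmem p).2 ⟨h1, h2⟩)
    have hA0 : 0 ≤ A := (abs_nonneg _).trans (hA' (0,0) (by simpa) (by simpa))
    refine ⟨fun n => A * ((R^3*L*R)^n / n.factorial),
      (Real.summable_pow_div_factorial _).mul_left A, fun n p hp => ?_⟩
    obtain ⟨h1, h2⟩ := (hmem p).1 hp
    refine (pic_bound G hG R L A hR hL0 hL hA' n p h1 h2).trans ?_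
    simp only
    gcongr
  set v : ℝ × ℝ → ℝ := fun p => ∑' n, (pic G (n+1) p - pic G n p) with hv
  have hvc : Continuous v := by
    rw [continuous_iff_continuousAt]
    intro p
    obtain ⟨u, hu, hb⟩ := key (‖p‖+1) (by positivity)
    have := continuousOn_tsum (f := fun n p => pic G (n+1) p - pic G n p)
      (fun n => ((pic_cont G hG (n+1)).sub (pic_cont G hG n)).continuousOn) hu hb
    refine this.continuousAt (Metric.closedBall_mem_nhds_of_mem ?_)
    simp
  have hlim : ∀ p, Tendsto (fun n => pic G n p) atTop (𝓝 (v p)) := by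
    intro p
    obtain ⟨u, hu, hb⟩ := key (‖p‖) (by positivity)
    have hs : Summable (fun n => pic G (n+1) p - pic G n p) :=
      Summable.of_norm_bounded hu (fun n => hb n p (by simp))
    have := hs.hasSum.tendsto_sum_nat
    simp_rw [Finset.sum_range_sub (fun n => pic G n p)] at this
    simpa [pic.eq_1] using this
  refine ⟨v, hvc, fun p => ?_⟩
  have h1 := (tendsto_add_atTop_iff_nat 1).2 (hlim p)
  refine tendsto_nhds_unique h1 ?_
  simp only [pic]
  refine tendsto_const_nhds.sub (tendsto_const_nhds.mul ?_)
  refine intervalIntegral.tendsto_integral_filter_of_dominated_convergence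
    (fun θ => |(1-θ)^3*θ| * M (p.2*θ)) ?_ ?_ ?_ ?_
  · refine Eventually.of_forall fun n => ?_
    have := pic_cont G hG n
    have h2 : Continuous (fun θ : ℝ => Function.uncurry G (p.2*θ, pic G n (p.1, p.2*θ))) := by
      fun_prop
    simp only [Function.uncurry] at h2
    exact Continuous.aestronglyMeasurable (by fun_prop)
  · refine Eventually.of_forall fun n => ae_of_all _ fun θ _ => ?_
    rw [norm_mul]
    exact mul_le_mul_of_nonneg_left (hGM _ _) (norm_nonneg _)
  · exact Continuous.intervalIntegrable (by fun_prop) _ _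
  · refine ae_of_all _ fun θ _ => ?_
    refine tendsto_const_nhds.mul ?_
    have hGc : Continuous (fun t => Function.uncurry G (p.2*θ, t)) := by fun_prop
    exact (hGc.tendsto _).comp (hlim (p.1, p.2*θ))

lemma rpow_lip (q m : ℝ) (hq : 0 < q) (hm : 0 < m) (a b : ℝ) (ha : m ≤ a) (hb : m ≤ b) :
    |a ^ (-q) - b ^ (-q)| ≤ q * m ^ (-q-1) * |a - b| := by
  have := Convex.norm_image_sub_le_of_norm_hasDerivWithin_le (s := Set.Ici m)
    (f := fun x : ℝ => x ^ (-q)) (f' := fun x => (-q) * x ^ (-q-1)) (C := q * m ^ (-q-1))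
    (x := b) (y := a) ?_ ?_ (convex_Ici m) hb ha
  · simpa using this
  · intro x hx
    exact (Real.hasDerivAt_rpow_const (Or.inl (hm.trans_le hx).ne')).hasDerivWithinAt
  · intro x hx
    have hx0 : 0 < x := hm.trans_le hx
    rw [norm_mul, norm_neg, Real.norm_of_nonneg hq.le, Real.norm_of_nonneg (by positivity)]
    gcongr ?_ * ?_
    exact Real.rpow_le_rpow_of_nonpos hm hx (by linarith)

/-- one-dimensional shooting -/
lemma shooting (q : ℝ) (hq : 0 < q) (p : ℝ → ℝ) (hp : Continuous p) (hp0 : ∀ s, 0 < p s)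
    (hint : IntegrableOn (fun s => s * (p s)^(-q)) (Set.Ioi 0)) :
    ∃ w : ℝ → ℝ, Continuous w ∧ w 0 = 0 ∧ (∀ r, 0 < r → 0 ≤ w r) ∧
      ∀ r, 0 < r → w r = ∫ s in Set.Ioi (0:ℝ),
        s * (p s + max (w s) 0)^(-q) * (r^2/6 - (max (r-s) 0)^3/(6*r)) := by
  set G : ℝ → ℝ → ℝ := fun s t => (p s + max t 0)^(-q) with hGdef
  have hpos : ∀ s t, 0 < p s + max t 0 := fun s t => by
    have := hp0 s; have := le_max_right t 0; linarith
  have hG : Continuous (Function.uncurry G) := by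
    simp only [hGdef, Function.uncurry_def]
    refine Continuous.rpow_const (by fun_prop) fun a => Or.inl (hpos _ _).ne'
  have hG0 : ∀ s t, 0 ≤ G s t := fun s t => Real.rpow_nonneg (hpos s t).le _
  have hGM' : ∀ s t, G s t ≤ (p s)^(-q) := fun s t =>
    Real.rpow_le_rpow_of_nonpos (hp0 s) (by have := le_max_right t 0; linarith) (by linarith)
  have hM : Continuous (fun s => (p s)^(-q)) :=
    hp.rpow_const fun a => Or.inl (hp0 a).ne'
  obtain ⟨v, hv, hveq⟩ := picard G hG (fun s => (p s)^(-q)) hM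
    (fun s t => by rw [abs_of_nonneg (hG0 s t)]; exact hGM' s t) (by
      intro R
      rcases lt_or_ge R 0 with hR | hR
      · exact ⟨0, le_rfl, fun s hs => absurd (abs_nonneg s) (by linarith)⟩
      obtain ⟨s0, -, hs0⟩ := (isCompact_Icc (a := -R) (b := R)).exists_isMinOn
        ⟨0, by simp [hR]⟩ hp.continuousOn
      refine ⟨q * (p s0)^(-q-1), mul_nonneg hq.le (Real.rpow_nonneg (hp0 s0).le _), ?_⟩
      intro s hs t t'
      have hle : p s0 ≤ p s := hs0 (abs_le.1 hs)
      have h1 := rpow_lip q (p s0) hq (hp0 s0) (p s + max t 0) (p s + max t' 0)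
        (by have := le_max_right t 0; linarith) (by have := le_max_right t' 0; linarith)
      refine h1.trans (mul_le_mul_of_nonneg_left ?_ (mul_nonneg hq.le (Real.rpow_nonneg (hp0 s0).le _)))
      rw [add_sub_add_left_eq_sub]
      exact abs_max_sub_max_le_abs t t' 0)
  have hGc : ∀ β, Continuous (fun s => G s (v (β, s))) := by
    intro β
    exact hG.comp (f := fun s : ℝ => (s, v (β, s))) (by fun_prop)
  set Φ : ℝ → ℝ := fun β => ∫ s in Set.Ioi (0:ℝ), s * G s (v (β, s)) with hΦ
  have hbd : ∀ β, ∀ᵐ s ∂(volume.restrict (Set.Ioi (0:ℝ))),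
      ‖s * G s (v (β, s))‖ ≤ s * (p s)^(-q) := by
    intro β
    refine (ae_restrict_iff' measurableSet_Ioi).2 (ae_of_all _ fun s hs => ?_)
    have hs : 0 < s := hs
    rw [Real.norm_of_nonneg (mul_nonneg hs.le (hG0 _ _))]
    exact mul_le_mul_of_nonneg_left (hGM' _ _) hs.le
  have hmeas : ∀ β, AEStronglyMeasurable (fun s => s * G s (v (β, s))) (volume.restrict (Set.Ioi (0:ℝ))) :=
    fun β => (continuous_id.mul (hGc β)).aestronglyMeasurable
  have hΦc : Continuous Φ := by
    refine continuous_of_dominated hmeas hbd hint (ae_of_all _ fun s => ?_)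
    have : Continuous (fun β => G s (v (β, s))) :=
      hG.comp (f := fun β : ℝ => (s, v (β, s))) (by fun_prop)
    fun_prop
  have hΦi : ∀ β, IntegrableOn (fun s => s * G s (v (β, s))) (Set.Ioi 0) :=
    fun β => hint.mono' (hmeas β) (hbd β)
  have hΦ0 : ∀ β, 0 ≤ Φ β := fun β =>
    setIntegral_nonneg measurableSet_Ioi fun s hs => mul_nonneg (le_of_lt hs) (hG0 _ _)
  set B := ∫ s in Set.Ioi (0:ℝ), s * (p s)^(-q) with hB
  have hΦB : ∀ β, Φ β ≤ B := fun β =>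
    setIntegral_mono_on (hΦi β) hint measurableSet_Ioi fun s hs =>
      mul_le_mul_of_nonneg_left (hGM' _ _) (le_of_lt hs)
  obtain ⟨β, -, hβ⟩ : ∃ β ∈ Set.Icc 0 B, β - Φ β = 0 := by
    have := intermediate_value_Icc (f := fun β => β - Φ β) ((hΦ0 0).trans (hΦB 0))
      (by fun_prop)
    exact this ⟨by have := hΦ0 0; linarith, by have := hΦB B; linarith⟩
  have hβ' : β = Φ β := by linarith
  have hform : ∀ r, 0 < r → v (β, r) = ∫ s in Set.Ioi (0:ℝ),
        s * G s (v (β, s)) * (r^2/6 - (max (r-s) 0)^3/(6*r)) := by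
    intro r hr
    have e1 : r^4/6 * ∫ θ in (0:ℝ)..1, (1-θ)^3*θ*G (r*θ) (v (β, r*θ)) =
        ∫ s in Set.Ioi (0:ℝ), s * G s (v (β, s)) * ((max (r-s) 0)^3/(6*r)) := by
      have h := intervalIntegral.smul_integral_comp_mul_left (a := 0) (b := 1)
        (fun s => s * G s (v (β, s)) * ((max (r-s) 0)^3/(6*r))) r
      rw [mul_zero, mul_one, intervalIntegral.integral_of_le hr.le] at h
      have h' : ∫ s in Set.Ioi (0:ℝ), s * G s (v (β, s)) * ((max (r-s) 0)^3/(6*r)) =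
          ∫ s in Set.Ioc (0:ℝ) r, s * G s (v (β, s)) * ((max (r-s) 0)^3/(6*r)) := by
        refine setIntegral_eq_of_subset_of_forall_sdiff_eq_zero measurableSet_Ioi
          Set.Ioc_subset_Ioi_self fun s hs => ?_
        have : r < s := by
          by_contra hc
          exact hs.2 ⟨hs.1, not_lt.1 hc⟩
        rw [max_eq_right (by linarith)]
        simp
      rw [h', ← h, smul_eq_mul, ← intervalIntegral.integral_const_mul, ← intervalIntegral.integral_const_mul]
      refine intervalIntegral.integral_congr fun θ hθ => ?_
      rw [Set.uIcc_of_le zero_le_one] at hθ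
      rw [max_eq_left (by nlinarith [hθ.2])]
      field_simp
    have i1 : IntegrableOn (fun s => s * G s (v (β, s)) * (r^2/6)) (Set.Ioi 0) :=
      (hΦi β).mul_const _
    have i2 : IntegrableOn (fun s => s * G s (v (β, s)) * ((max (r-s) 0)^3/(6*r))) (Set.Ioi 0) := by
      refine Integrable.mono' ((hΦi β).mul_const (r^2/6)) ?_ ?_
      · exact (hmeas β).mul (Continuous.aestronglyMeasurable (by fun_prop))
      · refine (ae_restrict_iff' measurableSet_Ioi).2 (ae_of_all _ fun s hs => ?_)
        have hs : 0 < s := hs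
        have h0 := mul_nonneg hs.le (hG0 s (v (β, s)))
        rw [Real.norm_of_nonneg (mul_nonneg h0 (by positivity))]
        refine mul_le_mul_of_nonneg_left ?_ h0
        have : (max (r-s) 0)^3 ≤ r^3 := pow_le_pow_left₀ (by positivity) (max_le (by linarith) hr.le) 3
        rw [div_le_div_iff₀ (by positivity) (by positivity)]
        nlinarith
    simp_rw [mul_sub]
    rw [hveq (β, r), integral_sub i1 i2, integral_mul_const]
    simp only
    rw [e1]
    congr 1
    change β * r^2/6 = Φ β * (r^2/6)
    rw [← hβ']; ring
  refine ⟨fun r => v (β, r), by fun_prop, ?_, ?_, hform⟩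
  · show v (β, 0) = 0
    rw [hveq]; simp
  · intro r hr
    show 0 ≤ v (β, r)
    rw [hform r hr]
    refine setIntegral_nonneg measurableSet_Ioi fun s hs => ?_
    have hs : 0 < s := hs
    refine mul_nonneg (mul_nonneg hs.le (hG0 _ _)) ?_
    have : (max (r-s) 0)^3 ≤ r^3 := pow_le_pow_left₀ (by positivity) (max_le (by linarith) hr.le) 3
    rw [sub_nonneg, div_le_div_iff₀ (by positivity) (by positivity)]
    nlinarith

/-- **Proposition.** If `P : ℝ³ → (0,∞)` is continuous, radially symmetric, with
`∫ |x| P(x)^{-q} dx < ∞` for some `q > 0`, then there is a continuous radially symmetric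
function `v` of at most linear growth with `min v = v(0) = 0` solving
`v(x) = (8π)⁻¹ ∫ (|x−y| − |y|)(P(y)+v(y))^{-q} dy`, and
`v(x)/|x| → (8π)⁻¹ ∫ (P(y)+v(y))^{-q} dy` as `|x| → ∞`. -/
theorem exists_radial_solution_integral_equation
    (q : ℝ) (hq : 0 < q) (P : EuclideanSpace ℝ (Fin 3) → ℝ)
    (hPcont : Continuous P) (hPpos : ∀ x, 0 < P x)
    (hPrad : ∀ x y, ‖x‖ = ‖y‖ → P x = P y)
    (hPint : Integrable (fun x => ‖x‖ * (P x) ^ (-q))) :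
    ∃ v : EuclideanSpace ℝ (Fin 3) → ℝ,
      Continuous v ∧
      (∀ x y, ‖x‖ = ‖y‖ → v x = v y) ∧
      (∃ C : ℝ, ∀ x, |v x| ≤ C * (1 + ‖x‖)) ∧
      v 0 = 0 ∧ (∀ x, 0 ≤ v x) ∧
      Integrable (fun y => (P y + v y) ^ (-q)) ∧
      (∀ x, Integrable (fun y => (‖x - y‖ - ‖y‖) * (P y + v y) ^ (-q))) ∧
      (∀ x, v x = (8 * π)⁻¹ * ∫ y, (‖x - y‖ - ‖y‖) * (P y + v y) ^ (-q)) ∧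
      Tendsto (fun x => v x / ‖x‖) (cocompact (EuclideanSpace ℝ (Fin 3)))
        (𝓝 ((8 * π)⁻¹ * ∫ y, (P y + v y) ^ (-q))) := by
  have hPq : Continuous (fun x => (P x)^(-q)) := hPcont.rpow_const fun a => Or.inl (hPpos a).ne'
  have hPq0 : ∀ x, 0 ≤ (P x)^(-q) := fun x => Real.rpow_nonneg (hPpos x).le _
  have hP1 : Integrable (fun x => (P x)^(-q)) := by
    rw [← integrableOn_univ, ← Set.union_compl_self (Metric.closedBall (0:E3) 1)]
    refine IntegrableOn.union (hPq.continuousOn.integrableOn_compact (isCompact_closedBall _ _)) ?_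
    refine Integrable.mono' hPint.integrableOn hPq.aestronglyMeasurable ?_
    refine (ae_restrict_iff' measurableSet_closedBall.compl).2 (ae_of_all _ fun x hx => ?_)
    rw [Real.norm_of_nonneg (hPq0 x)]
    have : 1 < ‖x‖ := by simpa using hx
    nlinarith [hPq0 x]
  set e1 : E3 := EuclideanSpace.single 0 1 with he1
  have hne1 : ‖e1‖ = 1 := by simp [he1]
  set p : ℝ → ℝ := fun s => P (s • e1) with hp
  have hpP : ∀ x, P x = p ‖x‖ := fun x => hPrad _ _ (by rw [norm_smul, hne1]; simp)
  have hpc : Continuous p := by fun_prop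
  have hp0 : ∀ s, 0 < p s := fun s => hPpos _
  have hpq : Continuous (fun s => (p s)^(-q)) := hpc.rpow_const fun a => Or.inl (hp0 a).ne'
  have hs2 : IntegrableOn (fun s => s^2 * (p s)^(-q)) (Set.Ioi 0) := by
    have h := hP1
    simp_rw [hpP] at h
    have := (integrable_fun_norm_addHaar (volume : Measure E3) (f := fun s => (p s)^(-q))).1 h
    simpa using this
  have hs1 : IntegrableOn (fun s => s * (p s)^(-q)) (Set.Ioi 0) := by
    rw [← Set.Ioc_union_Ioi_eq_Ioi (zero_le_one (α := ℝ))]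
    refine IntegrableOn.union ?_ ?_
    · exact ((continuous_id.mul hpq).continuousOn.integrableOn_compact
        (isCompact_Icc (a := (0:ℝ)) (b := 1))).mono_set Set.Ioc_subset_Icc_self
    · refine Integrable.mono' (hs2.mono_set (Set.Ioi_subset_Ioi zero_le_one))
        (continuous_id.mul hpq).aestronglyMeasurable ?_
      refine (ae_restrict_iff' measurableSet_Ioi).2 (ae_of_all _ fun s hs => ?_)
      have hs : 1 < s := hs
      have h0 : 0 ≤ (p s)^(-q) := Real.rpow_nonneg (hp0 s).le _
      rw [Real.norm_of_nonneg (mul_nonneg (by linarith) h0)]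
      gcongr
      nlinarith
  obtain ⟨w, hwc, hw0, hwpos, hweq⟩ := shooting q hq p hpc hp0 hs1
  have hwn : ∀ x : E3, 0 ≤ w ‖x‖ := by
    intro x
    rcases (norm_nonneg x).eq_or_lt with h | h
    · rw [← h, hw0]
    · exact hwpos _ h
  set f : ℝ → ℝ := fun s => (p s + max (w s) 0)^(-q) with hf
  have hfc : Continuous f := by
    refine Continuous.rpow_const (by fun_prop) fun s => Or.inl ?_
    have := hp0 s; have := le_max_right (w s) 0; linarith
  have hfy : ∀ y : E3, (P y + w ‖y‖)^(-q) = f ‖y‖ := by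
    intro y
    simp only [hf, hpP y, max_eq_left (hwn y)]
  have hf0 : ∀ y : E3, 0 ≤ f ‖y‖ := fun y => by
    rw [← hfy]; exact Real.rpow_nonneg (add_nonneg (hPpos y).le (hwn y)) _
  have hfP : ∀ y : E3, f ‖y‖ ≤ (P y)^(-q) := fun y => by
    rw [← hfy]
    exact Real.rpow_le_rpow_of_nonpos (hPpos y) (by linarith [hwn y]) (by linarith)
  have hfi : Integrable (fun y : E3 => f ‖y‖) := by
    refine hP1.mono' (hfc.comp continuous_norm).aestronglyMeasurable (ae_of_all _ fun y => ?_)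
    rw [Real.norm_of_nonneg (hf0 y)]; exact hfP y
  have hfi1 : Integrable (fun y : E3 => ‖y‖ * f ‖y‖) := by
    refine hPint.mono' (continuous_norm.mul (hfc.comp continuous_norm)).aestronglyMeasurable
      (ae_of_all _ fun y => ?_)
    rw [Real.norm_of_nonneg (mul_nonneg (norm_nonneg y) (hf0 y))]
    exact mul_le_mul_of_nonneg_left (hfP y) (norm_nonneg y)
  have hker := fun x => integrable_ker hfi x
  have hsol : ∀ x : E3, w ‖x‖ = (8 * π)⁻¹ * ∫ y, (‖x - y‖ - ‖y‖) * f ‖y‖ := by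
    intro x
    by_cases hx : x = 0
    · simp [hx, hw0]
    · have hr : 0 < ‖x‖ := norm_pos_iff.2 hx
      rw [radial_formula f hfc.measurable hfi x hx, hweq _ hr, ← mul_assoc, ← integral_const_mul]
      refine integral_congr_ae (ae_of_all _ fun s => ?_)
      simp only [hf]
      field_simp
      ring
  refine ⟨fun x => w ‖x‖, by fun_prop, fun x y h => by simp only [h], ?_, by simpa using hw0,
    hwn, ?_, ?_, ?_, ?_⟩
  · set I := ∫ y : E3, f ‖y‖ with hI
    have hI0 : 0 ≤ I := integral_nonneg hf0
    refine ⟨(8 * π)⁻¹ * I, fun x => ?_⟩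
    have hle : ∫ y, (‖x - y‖ - ‖y‖) * f ‖y‖ ≤ ‖x‖ * I := by
      rw [hI, ← integral_const_mul]
      refine integral_mono (hker x) (hfi.const_mul _) fun y => ?_
      refine mul_le_mul_of_nonneg_right ?_ (hf0 y)
      linarith [norm_sub_le x y]
    rw [abs_of_nonneg (hwn x), hsol x, mul_assoc]
    refine mul_le_mul_of_nonneg_left ?_ (by positivity)
    linarith
  · simpa only [hfy] using hfi
  · simpa only [hfy] using hker
  · simpa only [hfy] using hsol
  · simp only [hfy]
    set I := ∫ y : E3, f ‖y‖ with hI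
    set J := ∫ y : E3, ‖y‖ * f ‖y‖ with hJ
    have hT : Tendsto (fun x : E3 => (8*π)⁻¹ * (2 * J) / ‖x‖) (cocompact E3) (𝓝 0) :=
      (tendsto_norm_cocompact_atTop (E := E3)).const_div_atTop _
    rw [tendsto_iff_norm_sub_tendsto_zero]
    refine squeeze_zero' (Eventually.of_forall fun x => norm_nonneg _) ?_ hT
    have hev : ∀ᶠ x : E3 in cocompact E3, 0 < ‖x‖ :=
      (tendsto_norm_cocompact_atTop (E := E3)).eventually_gt_atTop 0
    filter_upwards [hev] with x hx
    have e : w ‖x‖ / ‖x‖ - (8*π)⁻¹ * I = (8*π)⁻¹ *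
        (∫ y, ((‖x - y‖ - ‖y‖) * f ‖y‖ - ‖x‖ * f ‖y‖)) / ‖x‖ := by
      rw [integral_sub (hker x) (hfi.const_mul _), integral_const_mul, hsol x, ← hI]
      field_simp
    have hb : ‖∫ y, ((‖x - y‖ - ‖y‖) * f ‖y‖ - ‖x‖ * f ‖y‖)‖ ≤ 2 * J := by
      rw [hJ, ← integral_const_mul]
      refine norm_integral_le_of_norm_le (hfi1.const_mul _) (ae_of_all _ fun y => ?_)
      rw [← sub_mul, norm_mul, Real.norm_of_nonneg (hf0 y), ← mul_assoc]
      refine mul_le_mul_of_nonneg_right ?_ (hf0 y)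
      rw [Real.norm_eq_abs, abs_le]
      have h1 := norm_sub_le x y
      have h2 := norm_sub_norm_le x y
      have := norm_nonneg y
      constructor <;> linarith
    rw [e, norm_div, norm_mul, Real.norm_of_nonneg (by positivity : (0:ℝ) ≤ (8*π)⁻¹), norm_norm]
    gcongr
end

section
/- Let q > 0 and let P : ℝ³ → (0, ∞) be a continuous function with P(−x) = P(x) for all x and ∫_{ℝ³} |x| P(x)^{−q} dx < ∞. Then there exists a positive continuous function v : ℝ³ → (0, ∞) with v(−x) = v(x) for all x and sup_{x∈ℝ³} |v(x)|/(1+|x|) < ∞, satisfying v(x) = (1/8π)∫_{ℝ³} |x−y| (P(y) + v(y))^{−q} dy for all x ∈ ℝ³, and min_{ℝ³} v = v(0). -/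
open MeasureTheory Filter Topology Real

noncomputable def KK (g : E3 → ℝ) (x : E3) : ℝ := (8 * π)⁻¹ * ∫ y, ‖x - y‖ * g y

def Dom (b g : E3 → ℝ) : Prop := Measurable g ∧ ∀ y, |g y| ≤ b y

lemma kpos : 0 < (8 * π)⁻¹ := by positivity

lemma Dom.int {b g : E3 → ℝ} (hb : Integrable b) (h : Dom b g) : Integrable g :=
  hb.mono' h.1.aestronglyMeasurable (Eventually.of_forall h.2)

lemma Dom.int1 {b g : E3 → ℝ} (hb1 : Integrable (fun y => ‖y‖ * b y)) (h : Dom b g) :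
    Integrable (fun y => ‖y‖ * g y) := by
  refine hb1.mono' (measurable_norm.mul h.1).aestronglyMeasurable (Eventually.of_forall fun y => ?_)
  rw [norm_mul, norm_norm]
  exact mul_le_mul_of_nonneg_left (h.2 y) (norm_nonneg _)

lemma Dom.intK {b g : E3 → ℝ} (hb : Integrable b) (hb1 : Integrable (fun y => ‖y‖ * b y))
    (h : Dom b g) (x : E3) : Integrable (fun y => ‖x - y‖ * g y) := by
  refine ((hb.const_mul ‖x‖).add hb1).mono'
    ((measurable_const.sub measurable_id).norm.mul h.1).aestronglyMeasurable
    (Eventually.of_forall fun y => ?_)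
  rw [norm_mul, norm_norm]
  have h1 := norm_sub_le x y
  have h2 := h.2 y
  have h3 : 0 ≤ b y := (abs_nonneg _).trans h2
  calc ‖x - y‖ * ‖g y‖ ≤ (‖x‖ + ‖y‖) * b y :=
        mul_le_mul h1 h2 (norm_nonneg _) (by positivity)
    _ = _ := by simp; ring

lemma Dom.self {b : E3 → ℝ} (hm : Measurable b) (h0 : ∀ y, 0 ≤ b y) : Dom b b :=
  ⟨hm, fun y => (abs_of_nonneg (h0 y)).le⟩

lemma KK_add {b f d : E3 → ℝ} (hb : Integrable b) (hb1 : Integrable (fun y => ‖y‖ * b y))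
    (hf : Dom b f) (hd : Dom b d) (t : ℝ) (x : E3) :
    KK (fun y => f y + t * d y) x = KK f x + t * KK d x := by
  unfold KK
  have : (fun y => ‖x - y‖ * (f y + t * d y)) =
      fun y => ‖x - y‖ * f y + t * (‖x - y‖ * d y) := by ext; ring
  rw [this, integral_add (hf.intK hb hb1 x) ((hd.intK hb hb1 x).const_mul t),
    integral_const_mul]
  ring

lemma KK_mono {b f g : E3 → ℝ} (hb : Integrable b) (hb1 : Integrable (fun y => ‖y‖ * b y))
    (hf : Dom b f) (hg : Dom b g) (h : ∀ y, f y ≤ g y) (x : E3) : KK f x ≤ KK g x := by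
  unfold KK
  refine mul_le_mul_of_nonneg_left ?_ kpos.le
  exact integral_mono (hf.intK hb hb1 x) (hg.intK hb hb1 x)
    fun y => mul_le_mul_of_nonneg_left (h y) (norm_nonneg _)

lemma KK_nonneg {f : E3 → ℝ} (h : ∀ y, 0 ≤ f y) (x : E3) : 0 ≤ KK f x :=
  mul_nonneg kpos.le (integral_nonneg fun y => mul_nonneg (norm_nonneg _) (h y))

lemma KK_abs {b f : E3 → ℝ} (hb : Integrable b) (hb1 : Integrable (fun y => ‖y‖ * b y))
    (hbm : Measurable b) (hf : Dom b f) (x : E3) : |KK f x| ≤ KK b x := by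
  have h0 : ∀ y, 0 ≤ b y := fun y => (abs_nonneg _).trans (hf.2 y)
  unfold KK
  rw [abs_mul, abs_of_pos kpos]
  refine mul_le_mul_of_nonneg_left ?_ kpos.le
  rw [← Real.norm_eq_abs]
  refine norm_integral_le_of_norm_le ((Dom.self hbm h0).intK hb hb1 x)
    (Eventually.of_forall fun y => ?_)
  rw [norm_mul, norm_norm]
  exact mul_le_mul_of_nonneg_left (hf.2 y) (norm_nonneg _)

lemma KK_lip {b g : E3 → ℝ} (hb : Integrable b) (hb1 : Integrable (fun y => ‖y‖ * b y))
    (hg : Dom b g) (x x' : E3) :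
    |KK g x - KK g x'| ≤ ((8 * π)⁻¹ * ∫ y, b y) * ‖x - x'‖ := by
  unfold KK
  rw [← mul_sub, ← integral_sub (hg.intK hb hb1 x) (hg.intK hb hb1 x'), abs_mul, abs_of_pos kpos,
    mul_assoc, ← integral_mul_const]
  refine mul_le_mul_of_nonneg_left ?_ kpos.le
  rw [← Real.norm_eq_abs]
  refine norm_integral_le_of_norm_le (hb.mul_const _) (Eventually.of_forall fun y => ?_)
  rw [← sub_mul, norm_mul, mul_comm]
  refine mul_le_mul (hg.2 y) ?_ (norm_nonneg _) ((abs_nonneg _).trans (hg.2 y))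
  have := abs_norm_sub_norm_le (x - y) (x' - y)
  simpa using this

lemma KK_cont {b g : E3 → ℝ} (hb : Integrable b) (hb1 : Integrable (fun y => ‖y‖ * b y))
    (hg : Dom b g) : Continuous (KK g) := by
  have h0 : 0 ≤ (8 * π)⁻¹ * ∫ y, b y :=
    mul_nonneg kpos.le (integral_nonneg fun y => (abs_nonneg _).trans (hg.2 y))
  refine (LipschitzWith.of_dist_le_mul (K := ⟨_, h0⟩) fun x y => ?_).continuous
  rw [dist_eq_norm, dist_eq_norm]
  exact KK_lip hb hb1 hg x y

lemma KK_lin {b : E3 → ℝ} (hb : Integrable b) (hb1 : Integrable (fun y => ‖y‖ * b y))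
    (hbm : Measurable b) (h0 : ∀ y, 0 ≤ b y) :
    ∃ C, ∀ x, KK b x ≤ C * (1 + ‖x‖) := by
  refine ⟨(8 * π)⁻¹ * ((∫ y, b y) + ∫ y, ‖y‖ * b y), fun x => ?_⟩
  unfold KK
  rw [mul_assoc]
  refine mul_le_mul_of_nonneg_left ?_ kpos.le
  have h1 : ∫ y, ‖x - y‖ * b y ≤ ∫ y, (‖x‖ * b y + ‖y‖ * b y) := by
    refine integral_mono ((Dom.self hbm h0).intK hb hb1 x) ((hb.const_mul _).add hb1) fun y => ?_
    have := mul_le_mul_of_nonneg_right (norm_sub_le x y) (h0 y)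
    simp only; linarith
  rw [integral_add (hb.const_mul _) hb1, integral_const_mul] at h1
  have h2 : 0 ≤ ∫ y, b y := integral_nonneg h0
  have h3 : 0 ≤ ∫ y, ‖y‖ * b y := integral_nonneg fun y => mul_nonneg (norm_nonneg _) (h0 y)
  nlinarith [norm_nonneg x, mul_nonneg h3 (norm_nonneg x)]

lemma int_bKb {b : E3 → ℝ} (hb : Integrable b) (hb1 : Integrable (fun y => ‖y‖ * b y))
    (hbm : Measurable b) (h0 : ∀ y, 0 ≤ b y) : Integrable (fun x => b x * KK b x) := by
  obtain ⟨C, hC⟩ := KK_lin hb hb1 hbm h0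
  refine ((hb.add hb1).const_mul C).mono'
    (hbm.mul (KK_cont hb hb1 (Dom.self hbm h0)).measurable).aestronglyMeasurable
    (Eventually.of_forall fun x => ?_)
  rw [Real.norm_of_nonneg (mul_nonneg (h0 x) (KK_nonneg h0 x))]
  have := mul_le_mul_of_nonneg_left (hC x) (h0 x)
  simp only [Pi.add_apply]; linarith

lemma int_fKg {b f g : E3 → ℝ} (hb : Integrable b) (hb1 : Integrable (fun y => ‖y‖ * b y))
    (hbm : Measurable b) (hf : Dom b f) (hg : Dom b g) : Integrable (fun x => f x * KK g x) := by
  have h0 : ∀ y, 0 ≤ b y := fun y => (abs_nonneg _).trans (hf.2 y)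
  refine (int_bKb hb hb1 hbm h0).mono'
    (hf.1.mul (KK_cont hb hb1 hg).measurable).aestronglyMeasurable
    (Eventually.of_forall fun x => ?_)
  rw [norm_mul]
  exact mul_le_mul (hf.2 x) (KK_abs hb hb1 hbm hg x) (norm_nonneg _) (h0 x)

lemma KK_symm {b f g : E3 → ℝ} (hb : Integrable b) (hb1 : Integrable (fun y => ‖y‖ * b y))
    (hf : Dom b f) (hg : Dom b g) :
    ∫ x, f x * KK g x = ∫ x, g x * KK f x := by
  have e : ∀ f g : E3 → ℝ, ∫ x, f x * KK g x = (8 * π)⁻¹ * ∫ x, ∫ y, f x * (‖x - y‖ * g y) := by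
    intro f g
    rw [← integral_const_mul]
    congr 1; ext x
    rw [integral_const_mul]; unfold KK; ring
  rw [e, e]
  congr 1
  rw [integral_integral_swap]
  · congr 1; ext x; congr 1; ext y; rw [norm_sub_rev]; ring
  · have i1 := (hf.int1 hb1).mul_prod (hg.int hb)
    have i2 := (hf.int hb).mul_prod (hg.int1 hb1)
    refine (i1.norm.add i2.norm).mono' ?_ (Eventually.of_forall fun z => ?_)
    · have := hf.1; have := hg.1
      apply Measurable.aestronglyMeasurable
      unfold Function.uncurry
      exact (hf.1.comp measurable_fst).mul
        ((measurable_fst.sub measurable_snd).norm.mul (hg.1.comp measurable_snd))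
    · simp only [Function.uncurry, norm_mul, norm_norm, Pi.add_apply]
      have := mul_le_mul_of_nonneg_right (norm_sub_le z.1 z.2)
        (mul_nonneg (norm_nonneg (f z.1)) (norm_nonneg (g z.2)))
      linarith

lemma KK_even {g : E3 → ℝ} (hg : ∀ y, g (-y) = g y) (x : E3) : KK g (-x) = KK g x := by
  unfold KK
  rw [← integral_neg_eq_self]
  congr 2; ext y
  rw [hg, ← norm_neg]; congr 2; abel

lemma KK_min {b g : E3 → ℝ} (hb : Integrable b) (hb1 : Integrable (fun y => ‖y‖ * b y))
    (hg : Dom b g) (h0 : ∀ y, 0 ≤ g y) (he : ∀ y, g (-y) = g y) (x : E3) : KK g 0 ≤ KK g x := by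
  have h1 : KK g 0 * 2 ≤ KK g x + KK g (-x) := by
    unfold KK
    rw [← mul_add, ← integral_add (hg.intK hb hb1 x) (hg.intK hb hb1 (-x)), mul_assoc,
      ← integral_mul_const]
    refine mul_le_mul_of_nonneg_left ?_ kpos.le
    refine integral_mono ((hg.intK hb hb1 0).mul_const 2)
      ((hg.intK hb hb1 x).add (hg.intK hb hb1 (-x))) fun y => ?_
    have h2 : ‖(0:E3) - y‖ * 2 ≤ ‖x - y‖ + ‖-x - y‖ := by
      have := norm_add_le (x - y) (-x - y)
      have e : (x - y) + (-x - y) = (2:ℝ) • ((0:E3) - y) := by rw [two_smul]; abel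
      rw [e, norm_smul] at this
      simp only [Real.norm_ofNat] at this
      linarith
    have := mul_le_mul_of_nonneg_right h2 (h0 y)
    simp only; linarith
  rw [KK_even he] at h1
  linarith

lemma KK_pos {b g : E3 → ℝ} (hb : Integrable b) (hb1 : Integrable (fun y => ‖y‖ * b y))
    (hg : Dom b g) (h0 : ∀ y, 0 < g y) (x : E3) : 0 < KK g x := by
  refine mul_pos kpos ?_
  rw [integral_pos_iff_support_of_nonneg (fun y => mul_nonneg (norm_nonneg _) (h0 y).le)
    (hg.intK hb hb1 x)]
  have : (Function.support fun y => ‖x - y‖ * g y) = {x}ᶜ := by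
    ext y
    have e : ‖x - y‖ = 0 ↔ y = x := by rw [norm_eq_zero, sub_eq_zero, eq_comm]
    simp [(h0 y).ne', e, -norm_eq_zero]
  rw [this]
  exact (isOpen_compl_singleton).measure_pos _ (by
    obtain ⟨y, hy⟩ := exists_ne x
    exact ⟨y, hy⟩)

lemma subseq {v : ℕ → E3 → ℝ} {L : ℝ} (hL : ∀ n x y, |v n x - v n y| ≤ L * ‖x - y‖)
    {M : E3 → ℝ} (hM : ∀ n x, |v n x| ≤ M x) :
    ∃ φ : ℕ → ℕ, StrictMono φ ∧ ∃ w : E3 → ℝ, ∀ x, Tendsto (fun n => v (φ n) x) atTop (𝓝 (w x)) := by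
  have hc : IsCompact (Set.pi Set.univ fun i : ℕ =>
      Set.Icc (-M (TopologicalSpace.denseSeq E3 i)) (M (TopologicalSpace.denseSeq E3 i))) :=
    isCompact_univ_pi fun i => isCompact_Icc
  obtain ⟨a, -, φ, hφ, ha⟩ := hc.tendsto_subseq
    (x := fun n i => v n (TopologicalSpace.denseSeq E3 i))
    (fun n i _ => abs_le.mp (hM n _))
  refine ⟨φ, hφ, ?_⟩
  rw [tendsto_pi_nhds] at ha
  have hC : ∀ x, ∃ w, Tendsto (fun n => v (φ n) x) atTop (𝓝 w) := by
    intro x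
    apply cauchySeq_tendsto_of_complete
    rw [Metric.cauchySeq_iff']
    intro ε hε
    have hLp : 0 < |L| + 1 := by positivity
    obtain ⟨i, hi⟩ := (TopologicalSpace.denseRange_denseSeq E3).exists_dist_lt x
      (show 0 < ε / 4 / (|L| + 1) by positivity)
    set d := TopologicalSpace.denseSeq E3 i
    obtain ⟨N, hN⟩ := Metric.cauchySeq_iff'.mp (ha i).cauchySeq (ε / 4) (by positivity)
    refine ⟨N, fun n hn => ?_⟩
    have h1 : ∀ m, |v m x - v m d| < ε / 4 := by
      intro m
      rw [dist_eq_norm, lt_div_iff₀ hLp] at hi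
      have := hL m x d
      have h2 : L * ‖x - d‖ ≤ (|L| + 1) * ‖x - d‖ :=
        mul_le_mul_of_nonneg_right (by linarith [le_abs_self L]) (norm_nonneg _)
      linarith
    have h3 := hN n hn
    rw [Real.dist_eq] at h3 ⊢
    have h3' : |v (φ n) d - v (φ N) d| < ε / 4 := h3
    have h4 := abs_lt.mp (h1 (φ n))
    have h5 := abs_lt.mp (h1 (φ N))
    have h6 := abs_lt.mp h3'
    rw [abs_lt]; constructor <;> linarith
  choose w hw using hC
  exact ⟨w, hw⟩

lemma exists_H (q : ℝ) (hq : 0 < q) :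
    ∃ H : ℝ → ℝ, Measurable H ∧ ∀ s, 0 < s → HasDerivAt H (-s ^ (-1/q)) s := by
  by_cases h : q = 1
  · subst h
    refine ⟨fun s => -Real.log s, Real.measurable_log.neg, fun s hs => ?_⟩
    have := (Real.hasDerivAt_log hs.ne').neg
    refine this.congr_deriv ?_
    norm_num [Real.rpow_neg_one]
  · refine ⟨fun s => -(s ^ (1 - 1/q) / (1 - 1/q)), by fun_prop, fun s hs => ?_⟩
    have h1 : 1 - 1/q ≠ 0 := by
      intro h2; apply h; field_simp at h2; linarith
    have := ((Real.hasDerivAt_rpow_const (p := 1 - 1/q) (Or.inl hs.ne')).div_const (1 - 1/q)).neg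
    refine this.congr_deriv ?_
    rw [mul_div_right_comm, div_self h1, one_mul]; congr 2; ring

/-- tangent inequality -/
lemma tangent {G G' : ℝ → ℝ} {b : ℝ} (hG : ∀ s, 0 < s → HasDerivAt G (G' s) s)
    (hmono : ∀ s t, 0 < s → s ≤ t → t ≤ b → G' s ≤ G' t)
    {s h : ℝ} (hs : 0 < s) (hsb : s ≤ b) (hh : 0 < h) (hhb : h ≤ b) :
    G' h * (s - h) ≤ G s - G h := by
  rcases lt_trichotomy s h with hlt | rfl | hlt
  · obtain ⟨c, ⟨hc1, hc2⟩, hc⟩ := exists_hasDerivAt_eq_slope G G' hlt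
      (fun x hx => (hG x (hs.trans_le hx.1)).continuousAt.continuousWithinAt)
      (fun x hx => hG x (hs.trans hx.1))
    rw [eq_div_iff (by linarith)] at hc
    have := hmono c h (hs.trans hc1) hc2.le hhb
    nlinarith
  · simp
  · obtain ⟨c, ⟨hc1, hc2⟩, hc⟩ := exists_hasDerivAt_eq_slope G G' hlt
      (fun x hx => (hG x (hh.trans_le hx.1)).continuousAt.continuousWithinAt)
      (fun x hx => hG x (hh.trans hx.1))
    rw [eq_div_iff (by linarith)] at hc
    have := hmono h c hh hc1.le (hc2.le.trans hsb)
    nlinarith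

lemma rpow_drop {q : ℝ} (hq : 0 < q) {b s t : ℝ} (hs : 0 < s) (hst : s ≤ t) (htb : t ≤ b) :
    (1/q * b ^ (-1/q - 1)) * (t - s) ≤ s ^ (-1/q) - t ^ (-1/q) := by
  have ht := hs.trans_le hst
  have hq1 : 0 < 1/q := by positivity
  have := tangent (G := fun s => s ^ (-1/q)) (G' := fun s => (-1/q) * s ^ (-1/q - 1)) (b := b)
    (fun s hs => Real.hasDerivAt_rpow_const (Or.inl hs.ne')) (fun s t hs hst _ => by
      have := Real.rpow_le_rpow_of_nonpos hs hst (z := -1/q - 1) (by rw [neg_div]; linarith)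
      have := mul_le_mul_of_nonneg_left this hq1.le
      simp only [neg_div] at *; linarith) hs (hst.trans htb) ht htb
  have h2 := Real.rpow_le_rpow_of_nonpos ht htb (z := -1/q - 1) (by rw [neg_div]; linarith)
  have h3 := mul_le_mul_of_nonneg_right (mul_le_mul_of_nonneg_left h2 hq1.le) (sub_nonneg.2 hst)
  simp only [neg_div] at *; linarith

lemma H_quad {q : ℝ} (hq : 0 < q) {H : ℝ → ℝ} (hH : ∀ s, 0 < s → HasDerivAt H (-s ^ (-1/q)) s)
    {b s h : ℝ} (hs : 0 < s) (hsb : s ≤ b) (hh : 0 < h) (hhb : h ≤ b) :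
    (1/q * b ^ (-1/q - 1)) / 2 * (s - h) ^ 2 ≤ H s - H h + h ^ (-1/q) * (s - h) := by
  set c := 1/q * b ^ (-1/q - 1) with hc
  have := tangent (G := fun s => H s - c / 2 * s ^ 2) (G' := fun s => -s ^ (-1/q) - c * s) (b := b)
    (fun s hs => by
      refine ((hH s hs).sub ((hasDerivAt_pow 2 s).const_mul (c/2))).congr_deriv ?_
      push_cast; ring)
    (fun s t hs hst htb => by
      have := rpow_drop hq hs hst htb
      rw [← hc] at this
      linarith) hs hsb hh hhb
  nlinarith

lemma H_tan {q : ℝ} (hq : 0 < q) {H : ℝ → ℝ} (hH : ∀ s, 0 < s → HasDerivAt H (-s ^ (-1/q)) s)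
    {s h : ℝ} (hs : 0 < s) (hh : 0 < h) :
    0 ≤ H s - H h + h ^ (-1/q) * (s - h) := by
  have hb : 0 < max s h := lt_max_of_lt_left hs
  refine le_trans ?_ (H_quad hq hH hs (le_max_left s h) hh (le_max_right s h))
  have := Real.rpow_pos_of_pos hb (-1/q - 1)
  positivity

lemma H_conv {q : ℝ} (hq : 0 < q) {H : ℝ → ℝ} (hH : ∀ s, 0 < s → HasDerivAt H (-s ^ (-1/q)) s)
    {s h t : ℝ} (hs : 0 < s) (hh : 0 < h) (ht : 0 ≤ t) (ht1 : t ≤ 1) :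
    H (s + t * (h - s)) ≤ H s + t * (H h - H s) := by
  have hm : 0 < s + t * (h - s) := by
    rcases le_total s h with h1 | h1
    · nlinarith
    · nlinarith
  have h1 := H_tan hq hH hs hm
  have h2 := H_tan hq hH hh hm
  nlinarith [mul_le_mul_of_nonneg_left h1 (sub_nonneg.2 ht1), mul_le_mul_of_nonneg_left h2 ht]

lemma rpow_inv_cancel {q : ℝ} (hq : 0 < q) {p : ℝ} (hp : 0 < p) : (p ^ (-q)) ^ (-1/q) = p := by
  rw [← Real.rpow_mul hp.le]
  have : -q * (-1/q) = 1 := by field_simp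
  rw [this, Real.rpow_one]

structure Adm (q : ℝ) (P : E3 → ℝ) (g : E3 → ℝ) : Prop where
  meas : Measurable g
  even : ∀ y, g (-y) = g y
  lo : ∀ y, (P y + KK (fun y => P y ^ (-q)) y) ^ (-q) ≤ g y
  hi : ∀ y, g y ≤ P y ^ (-q)

structure Hyp (q : ℝ) (P : E3 → ℝ) (H : ℝ → ℝ) : Prop where
  hq : 0 < q
  cont : Continuous P
  pos : ∀ x, 0 < P x
  even : ∀ x, P (-x) = P x
  hb : Integrable (fun y => P y ^ (-q))
  hb1 : Integrable (fun y => ‖y‖ * P y ^ (-q))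
  Hm : Measurable H
  hH : ∀ s, 0 < s → HasDerivAt H (-s ^ (-1/q)) s

noncomputable def Phi (q : ℝ) (P : E3 → ℝ) (H : ℝ → ℝ) (g : E3 → ℝ) (y : E3) : ℝ :=
  H (g y) - H (P y ^ (-q)) + P y * (g y - P y ^ (-q))

noncomputable def FF (q : ℝ) (P : E3 → ℝ) (H : ℝ → ℝ) (g : E3 → ℝ) : ℝ :=
  1/2 * (∫ x, g x * KK g x) + ∫ x, Phi q P H g x

noncomputable def SS (q : ℝ) (P : E3 → ℝ) (g : E3 → ℝ) (y : E3) : ℝ := (P y + KK g y) ^ (-q)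

section
variable {q : ℝ} {P : E3 → ℝ} {H : ℝ → ℝ} {g h : E3 → ℝ}

lemma Hyp.bpos (A : Hyp q P H) (y : E3) : 0 < P y ^ (-q) := Real.rpow_pos_of_pos (A.pos y) _

lemma Hyp.bm (A : Hyp q P H) : Measurable (fun y => P y ^ (-q)) :=
  A.cont.measurable.pow_const _

lemma Hyp.w0 (A : Hyp q P H) (y : E3) : 0 ≤ KK (fun y => P y ^ (-q)) y :=
  KK_nonneg (fun y => (A.bpos y).le) y

lemma Adm.pos (A : Hyp q P H) (a : Adm q P g) (y : E3) : 0 < g y :=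
  (Real.rpow_pos_of_pos (by linarith [A.pos y, A.w0 y]) _).trans_le (a.lo y)

lemma Adm.dom (A : Hyp q P H) (a : Adm q P g) : Dom (fun y => P y ^ (-q)) g :=
  ⟨a.meas, fun y => by rw [abs_of_pos (a.pos A y)]; exact a.hi y⟩

lemma Adm.b (A : Hyp q P H) : Adm q P (fun y => P y ^ (-q)) :=
  ⟨A.bm, fun y => by simp only [A.even], fun y =>
    Real.rpow_le_rpow_of_nonpos (A.pos y) (by linarith [A.w0 y]) (by linarith [A.hq]), fun _ => le_rfl⟩

lemma Adm.SS (A : Hyp q P H) (a : Adm q P g) : Adm q P (SS q P g) := by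
  have k0 : ∀ y, 0 ≤ KK g y := KK_nonneg fun y => (a.pos A y).le
  refine ⟨(A.cont.measurable.add (KK_cont A.hb A.hb1 (a.dom A)).measurable).pow_const _, fun y => ?_,
    fun y => ?_, fun y => ?_⟩
  · simp only [_root_.SS, A.even, KK_even a.even]
  · refine Real.rpow_le_rpow_of_nonpos (by linarith [A.pos y, k0 y]) ?_ (by linarith [A.hq])
    have := KK_mono A.hb A.hb1 (a.dom A) ((Adm.b A).dom A) a.hi y
    linarith
  · exact Real.rpow_le_rpow_of_nonpos (A.pos y) (by linarith [k0 y]) (by linarith [A.hq])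

lemma Adm.comb (a : Adm q P g) (c : Adm q P h) {t : ℝ} (ht : 0 ≤ t) (ht1 : t ≤ 1) :
    Adm q P (fun y => g y + t * (h y - g y)) := by
  refine ⟨a.meas.add ((c.meas.sub a.meas).const_mul t), fun y => by simp only [a.even, c.even],
    fun y => ?_, fun y => ?_⟩
  · nlinarith [a.lo y, c.lo y]
  · nlinarith [a.hi y, c.hi y]

lemma Adm.sub_dom (A : Hyp q P H) (a : Adm q P g) (c : Adm q P h) :
    Dom (fun y => P y ^ (-q)) (fun y => h y - g y) :=
  ⟨c.meas.sub a.meas, fun y => by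
    rw [abs_le]; constructor <;> linarith [a.hi y, c.hi y, a.pos A y, c.pos A y]⟩

lemma Phi_nonneg (A : Hyp q P H) (a : Adm q P g) (y : E3) : 0 ≤ Phi q P H g y := by
  have := H_tan A.hq A.hH (a.pos A y) (A.bpos y)
  rwa [rpow_inv_cancel A.hq (A.pos y)] at this

lemma Phi_le (A : Hyp q P H) (a : Adm q P g) (y : E3) :
    Phi q P H g y ≤ P y ^ (-q) * KK (fun y => P y ^ (-q)) y := by
  have h1 := H_tan A.hq A.hH (A.bpos y) (a.pos A y)
  have hp : 0 < P y + KK (fun y => P y ^ (-q)) y := by linarith [A.pos y, A.w0 y]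
  have h2 : g y ^ (-1/q) ≤ P y + KK (fun y => P y ^ (-q)) y := by
    have := Real.rpow_le_rpow_of_nonpos (Real.rpow_pos_of_pos hp (-q)) (a.lo y) (z := -1/q)
      (by have := A.hq; rw [neg_div]; simp; positivity)
    rwa [rpow_inv_cancel A.hq hp] at this
  unfold Phi
  have h3 := mul_le_mul_of_nonneg_right h2 (sub_nonneg.2 (a.hi y))
  have h4 := mul_nonneg (A.w0 y) (a.pos A y).le
  nlinarith

lemma Phi_int (A : Hyp q P H) (a : Adm q P g) : Integrable (Phi q P H g) := by
  refine (int_bKb A.hb A.hb1 A.bm fun y => (A.bpos y).le).mono' ?_ (Eventually.of_forall fun y => ?_)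
  · exact (((A.Hm.comp a.meas).sub (A.Hm.comp A.bm)).add
      (A.cont.measurable.mul (a.meas.sub A.bm))).aestronglyMeasurable
  · rw [Real.norm_of_nonneg (Phi_nonneg A a y)]; exact Phi_le A a y

lemma FF_nonneg (A : Hyp q P H) (a : Adm q P g) : 0 ≤ FF q P H g :=
  add_nonneg (mul_nonneg (by norm_num) (integral_nonneg fun x =>
    mul_nonneg (a.pos A x).le (KK_nonneg (fun y => (a.pos A y).le) x)))
    (integral_nonneg (Phi_nonneg A a))

noncomputable def RR (q : ℝ) (P : E3 → ℝ) (H : ℝ → ℝ) (g : E3 → ℝ) (y : E3) : ℝ :=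
  Phi q P H g y - Phi q P H (SS q P g) y - (SS q P g y - g y) * KK g y

lemma RR_ge (A : Hyp q P H) (a : Adm q P g) (y : E3) :
    (1/q * (P y ^ (-q)) ^ (-1/q - 1)) / 2 * (g y - SS q P g y) ^ 2 ≤ RR q P H g y := by
  have k0 : 0 ≤ KK g y := KK_nonneg (fun y => (a.pos A y).le) y
  have := H_quad A.hq A.hH (a.pos A y) (a.hi y) ((a.SS A).pos A y) ((a.SS A).hi y)
  have e : SS q P g y ^ (-1/q) = P y + KK g y :=
    rpow_inv_cancel A.hq (by linarith [A.pos y])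
  rw [e] at this
  refine this.trans (le_of_eq ?_)
  unfold RR Phi; ring

lemma RR_int (A : Hyp q P H) (a : Adm q P g) : Integrable (RR q P H g) :=
  ((Phi_int A a).sub (Phi_int A (a.SS A))).sub
    (int_fKg A.hb A.hb1 A.bm (a.sub_dom A (a.SS A)) (a.dom A))

lemma RR_nonneg (A : Hyp q P H) (a : Adm q P g) (y : E3) : 0 ≤ RR q P H g y := by
  refine le_trans ?_ (RR_ge A a y)
  have := Real.rpow_pos_of_pos (A.bpos y) (-1/q - 1)
  have := A.hq
  positivity

lemma step (A : Hyp q P H) (a : Adm q P g) {t : ℝ} (ht : 0 ≤ t) (ht1 : t ≤ 1) :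
    FF q P H (fun y => g y + t * (SS q P g y - g y)) ≤ FF q P H g - t * (∫ y, RR q P H g y)
      + t ^ 2 * (1/2 * ∫ y, P y ^ (-q) * KK (fun y => P y ^ (-q)) y) := by
  have c := a.SS A
  set h := SS q P g with hh
  have dg := a.dom A
  have dd := a.sub_dom A c
  have i1 := int_fKg A.hb A.hb1 A.bm dg dg
  have i2 := int_fKg A.hb A.hb1 A.bm dg dd
  have i3 := int_fKg A.hb A.hb1 A.bm dd dg
  have i4 := int_fKg A.hb A.hb1 A.bm dd dd
  have e1 : ∫ x, (g x + t * (h x - g x)) * KK (fun y => g y + t * (h y - g y)) x =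
      (∫ x, g x * KK g x) + 2 * t * (∫ x, (h x - g x) * KK g x)
        + t ^ 2 * ∫ x, (h x - g x) * KK (fun y => h y - g y) x := by
    have : (fun x => (g x + t * (h x - g x)) * KK (fun y => g y + t * (h y - g y)) x) =
        fun x => (g x * KK g x + t * (g x * KK (fun y => h y - g y) x)) +
          (t * ((h x - g x) * KK g x) + t ^ 2 * ((h x - g x) * KK (fun y => h y - g y) x)) := by
      ext x
      rw [KK_add A.hb A.hb1 dg dd]; ring
    have j1 : Integrable (fun x => g x * KK g x + t * (g x * KK (fun y => h y - g y) x)) :=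
      i1.add (i2.const_mul t)
    have j2 : Integrable (fun x => t * ((h x - g x) * KK g x) +
        t ^ 2 * ((h x - g x) * KK (fun y => h y - g y) x)) :=
      (i3.const_mul t).add (i4.const_mul _)
    rw [this, integral_add j1 j2,
      integral_add i1 (i2.const_mul t), integral_add (i3.const_mul t) (i4.const_mul _),
      integral_const_mul, integral_const_mul, integral_const_mul, KK_symm A.hb A.hb1 dg dd]
    ring
  have e2 : ∫ x, (h x - g x) * KK (fun y => h y - g y) x ≤
      ∫ y, P y ^ (-q) * KK (fun y => P y ^ (-q)) y := by
    refine integral_mono i4 (int_bKb A.hb A.hb1 A.bm fun y => (A.bpos y).le) fun x => ?_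
    refine (le_abs_self _).trans ?_
    rw [abs_mul]
    exact mul_le_mul (dd.2 x) (KK_abs A.hb A.hb1 A.bm dd x) (abs_nonneg _) (A.bpos x).le
  have e3 : ∫ x, Phi q P H (fun y => g y + t * (h y - g y)) x ≤
      (∫ x, Phi q P H g x) + t * ((∫ x, Phi q P H h x) - ∫ x, Phi q P H g x) := by
    have j1 : Integrable (fun x => t * (Phi q P H h x - Phi q P H g x)) :=
      ((Phi_int A c).sub (Phi_int A a)).const_mul t
    rw [← integral_sub (Phi_int A c) (Phi_int A a), ← integral_const_mul,
      ← integral_add (Phi_int A a) j1]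
    refine integral_mono (Phi_int A (a.comb c ht ht1)) ((Phi_int A a).add j1) fun x => ?_
    have := H_conv A.hq A.hH (a.pos A x) (c.pos A x) ht ht1
    simp only [Phi, Pi.add_apply, Pi.sub_apply]
    nlinarith
  have e4 : ∫ y, RR q P H g y = (∫ x, Phi q P H g x) - (∫ x, Phi q P H h x)
      - ∫ x, (h x - g x) * KK g x := by
    unfold RR
    rw [← hh]
    have j1 : Integrable (fun x => Phi q P H g x - Phi q P H h x) :=
      (Phi_int A a).sub (Phi_int A c)
    rw [integral_sub j1 i3, integral_sub (Phi_int A a) (Phi_int A c)]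
  unfold FF
  rw [e1, e4]
  have := mul_le_mul_of_nonneg_left e2 (sq_nonneg t)
  linarith

lemma exists_seq (A : Hyp q P H) : ∃ g : ℕ → E3 → ℝ, (∀ n, Adm q P (g n)) ∧
    Tendsto (fun n => ∫ y, RR q P H (g n) y) atTop (𝓝 0) := by
  set I := FF q P H '' {g | Adm q P g} with hI
  have hbd : BddBelow I := ⟨0, by rintro _ ⟨g, hg, rfl⟩; exact FF_nonneg A hg⟩
  have hne : I.Nonempty := ⟨_, _, Adm.b A, rfl⟩
  have : ∀ n : ℕ, ∃ g, Adm q P g ∧ FF q P H g < sInf I + (1 / ((n:ℝ) + 1)) ^ 2 := by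
    intro n
    obtain ⟨_, ⟨g, hg, rfl⟩, hlt⟩ := exists_lt_of_csInf_lt hne
      (show sInf I < sInf I + (1 / ((n:ℝ) + 1)) ^ 2 by have : 0 < (1 / ((n:ℝ) + 1)) ^ 2 := by positivity
                                                       linarith)
    exact ⟨g, hg, hlt⟩
  choose g hg hlt using this
  refine ⟨g, hg, ?_⟩
  set C := 1/2 * ∫ y, P y ^ (-q) * KK (fun y => P y ^ (-q)) y
  have hlim : Tendsto (fun n : ℕ => (1 / ((n:ℝ) + 1)) * (1 + C)) atTop (𝓝 0) := by
    simpa using (tendsto_one_div_add_atTop_nhds_zero_nat (𝕜 := ℝ)).mul_const (1 + C)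
  refine squeeze_zero (fun n => integral_nonneg (RR_nonneg A (hg n))) (fun n => ?_) hlim
  have ht : 0 < 1 / ((n:ℝ) + 1) := by positivity
  have ht1 : 1 / ((n:ℝ) + 1) ≤ 1 := by
    rw [div_le_one (by positivity)]; linarith [n.cast_nonneg (α := ℝ)]
  set t := 1 / ((n:ℝ) + 1)
  have h1 := step A (hg n) ht.le ht1
  have h2 := csInf_le hbd ⟨_, (hg n).comb ((hg n).SS A) ht.le ht1, rfl⟩
  have h3 := hlt n
  have h4 : t * (∫ y, RR q P H (g n) y) ≤ t * (t * (1 + C)) := by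
    change _ ≤ _ - _ + t ^ 2 * C at h1
    change _ < _ + t ^ 2 at h3
    linarith
  exact le_of_mul_le_mul_left h4 ht

lemma exists_sol (A : Hyp q P H) : ∃ v : E3 → ℝ, (∀ x, 0 ≤ v x) ∧ (∀ x, v (-x) = v x) ∧
    Dom (fun y => P y ^ (-q)) (fun y => (P y + v y) ^ (-q)) ∧
    ∀ x, v x = KK (fun y => (P y + v y) ^ (-q)) x := by
  obtain ⟨g, hg, hlim⟩ := exists_seq A
  obtain ⟨φ, hφ, v, hv⟩ := subseq (v := fun n => KK (g n))
    (fun n x y => KK_lip A.hb A.hb1 ((hg n).dom A) x y)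
    (fun n x => KK_abs A.hb A.hb1 A.bm ((hg n).dom A) x)
  have hv0 : ∀ x, 0 ≤ v x := fun x =>
    ge_of_tendsto' (hv x) fun n => KK_nonneg (fun y => ((hg _).pos A y).le) x
  have hve : ∀ x, v (-x) = v x := fun x => by
    refine tendsto_nhds_unique (hv (-x)) ((hv x).congr fun n => ?_)
    exact (KK_even (hg _).even x).symm
  have hvm : Measurable v := measurable_of_tendsto_metrizable
    (fun n => (KK_cont A.hb A.hb1 ((hg (φ n)).dom A)).measurable) (tendsto_pi_nhds.2 hv)
  have hD : Dom (fun y => P y ^ (-q)) (fun y => (P y + v y) ^ (-q)) := by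
    refine ⟨(A.cont.measurable.add hvm).pow_const _, fun y => ?_⟩
    rw [abs_of_pos (Real.rpow_pos_of_pos (by linarith [A.pos y, hv0 y]) _)]
    exact Real.rpow_le_rpow_of_nonpos (A.pos y) (by linarith [hv0 y]) (by linarith [A.hq])
  refine ⟨v, hv0, hve, hD, ?_⟩
  -- a.e. convergence of the residual
  have hR : TendstoInMeasure volume (fun n => RR q P H (g (φ n))) atTop (fun _ => (0:ℝ)) := by
    refine tendstoInMeasure_of_tendsto_eLpNorm one_ne_zero
      (fun n => (RR_int A (hg _)).aestronglyMeasurable) aestronglyMeasurable_const ?_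
    have h1 : Tendsto (fun n => ENNReal.ofReal (∫ y, RR q P H (g (φ n)) y)) atTop (𝓝 0) := by
      have := ENNReal.tendsto_ofReal (hlim.comp hφ.tendsto_atTop)
      simpa using this
    refine h1.congr fun n => ?_
    rw [eLpNorm_one_eq_lintegral_enorm, ofReal_integral_eq_lintegral_ofReal (RR_int A (hg _))
      (Eventually.of_forall (RR_nonneg A (hg _)))]
    congr 1; ext y
    simp only [Pi.sub_apply, sub_zero]
    rw [Real.enorm_eq_ofReal (RR_nonneg A (hg _) y)]
  obtain ⟨ψ, hψ, hae⟩ := hR.exists_seq_tendsto_ae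
  have hga : ∀ᵐ y, Tendsto (fun n => g (φ (ψ n)) y) atTop (𝓝 ((P y + v y) ^ (-q))) := by
    filter_upwards [hae] with y hy
    have hc : 0 < (1/q * (P y ^ (-q)) ^ (-1/q - 1)) / 2 := by
      have := Real.rpow_pos_of_pos (A.bpos y) (-1/q - 1)
      have := A.hq
      positivity
    set c := (1/q * (P y ^ (-q)) ^ (-1/q - 1)) / 2
    have h1 : Tendsto (fun n => (g (φ (ψ n)) y - SS q P (g (φ (ψ n))) y) ^ 2) atTop (𝓝 0) := by
      have h2 : Tendsto (fun n => RR q P H (g (φ (ψ n))) y / c) atTop (𝓝 0) := by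
        simpa using hy.div_const c
      refine squeeze_zero (fun n => sq_nonneg _) (fun n => ?_) h2
      rw [le_div_iff₀ hc, mul_comm]
      exact RR_ge A (hg _) y
    have h3 : Tendsto (fun n => g (φ (ψ n)) y - SS q P (g (φ (ψ n))) y) atTop (𝓝 0) := by
      have := h1.sqrt
      simp only [Real.sqrt_sq_eq_abs, Real.sqrt_zero] at this
      exact (tendsto_zero_iff_abs_tendsto_zero _).2 this
    have h4 : Tendsto (fun n => SS q P (g (φ (ψ n))) y) atTop (𝓝 ((P y + v y) ^ (-q))) := by
      refine Tendsto.rpow_const (tendsto_const_nhds.add ((hv y).comp hψ.tendsto_atTop)) (Or.inl ?_)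
      linarith [A.pos y, hv0 y]
    simpa using h3.add h4
  intro x
  refine tendsto_nhds_unique ((hv x).comp hψ.tendsto_atTop) ?_
  refine Tendsto.const_mul _ ?_
  refine tendsto_integral_of_dominated_convergence (fun y => ‖x - y‖ * P y ^ (-q))
    (fun n => (((hg _).dom A).intK A.hb A.hb1 x).aestronglyMeasurable)
    (((Adm.b A).dom A).intK A.hb A.hb1 x) (fun n => Eventually.of_forall fun y => ?_) ?_
  · rw [norm_mul, norm_norm]
    exact mul_le_mul_of_nonneg_left (((hg _).dom A).2 y) (norm_nonneg _)
  · filter_upwards [hga] with y hy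
    exact hy.const_mul _

end

theorem exists_even_solution_integral_equation_full_kernel
    (q : ℝ) (hq : 0 < q) (P : EuclideanSpace ℝ (Fin 3) → ℝ)
    (hPcont : Continuous P) (hPpos : ∀ x, 0 < P x) (hPeven : ∀ x, P (-x) = P x)
    (hPint : Integrable (fun x => ‖x‖ * (P x) ^ (-q))) :
    ∃ v : EuclideanSpace ℝ (Fin 3) → ℝ,
      Continuous v ∧
      (∀ x, 0 < v x) ∧
      (∀ x, v (-x) = v x) ∧
      (∃ C : ℝ, ∀ x, |v x| ≤ C * (1 + ‖x‖)) ∧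
      (∀ x, Integrable (fun y => ‖x - y‖ * (P y + v y) ^ (-q))) ∧
      (∀ x, v x = (8 * π)⁻¹ * ∫ y, ‖x - y‖ * (P y + v y) ^ (-q)) ∧
      (∀ x, v 0 ≤ v x) := by
  have hbc : Continuous (fun y => P y ^ (-q)) :=
    hPcont.rpow_const fun y => Or.inl (hPpos y).ne'
  have hb : Integrable (fun y => P y ^ (-q)) := by
    have h1 : IntegrableOn (fun y => P y ^ (-q)) (Metric.closedBall 0 1) :=
      hbc.continuousOn.integrableOn_compact (isCompact_closedBall _ _)
    have h2 : IntegrableOn (fun y => P y ^ (-q)) (Metric.closedBall 0 1)ᶜ := by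
      refine (hPint.integrableOn (s := (Metric.closedBall 0 1)ᶜ)).mono'
        hbc.aestronglyMeasurable ?_
      refine (ae_restrict_iff' Metric.isClosed_closedBall.measurableSet.compl).2
        (Eventually.of_forall fun y hy => ?_)
      have hy1 : 1 < ‖y‖ := by simpa using hy
      have := Real.rpow_pos_of_pos (hPpos y) (-q)
      rw [Real.norm_of_nonneg this.le]
      nlinarith
    have := h1.union h2
    rwa [Set.union_compl_self, integrableOn_univ] at this
  obtain ⟨H, Hm, hH⟩ := exists_H q hq
  have A : Hyp q P H := ⟨hq, hPcont, hPpos, hPeven, hb, hPint, Hm, hH⟩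
  obtain ⟨v, hv0, hve, hD, hv⟩ := exists_sol A
  have hf0 : ∀ y, 0 < (P y + v y) ^ (-q) := fun y =>
    Real.rpow_pos_of_pos (by linarith [hPpos y, hv0 y]) _
  have hvK : v = KK (fun y => (P y + v y) ^ (-q)) := funext hv
  refine ⟨v, ?_, ?_, hve, ?_, hD.intK hb hPint, hv, ?_⟩
  · rw [hvK]; exact KK_cont hb hPint hD
  · intro x; rw [hv x]; exact KK_pos hb hPint hD hf0 x
  · obtain ⟨C, hC⟩ := KK_lin hb hPint A.bm fun y => (A.bpos y).le
    refine ⟨C, fun x => ?_⟩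
    rw [hv x]
    exact (KK_abs hb hPint A.bm hD x).trans (hC x)
  · intro x
    rw [hv x, hv 0]
    exact KK_min hb hPint hD (fun y => (hf0 y).le) (fun y => by simp only [hPeven, hve]) x
end

section
/- Let f : ℝ³ → [0, ∞) be a measurable function with 0 < ∫_{ℝ³} f(y) dy < ∞, and set β := (1/8π)∫_{ℝ³} f(y) dy. Define v(x) := (1/8π)∫_{ℝ³} (|x−y| − |y|) f(y) dy. Then |v(x)| ≤ β|x| for all x ∈ ℝ³, and lim_{|x|→∞} v(x)/|x| = β. -/
open MeasureTheory Filter Topology Real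

/-- If `f ≥ 0` is measurable with `0 < ∫ f < ∞`, `β := (8π)⁻¹ ∫ f`, and
`v(x) := (8π)⁻¹ ∫ (|x−y| − |y|) f(y) dy`, then `|v(x)| ≤ β|x|` for all `x` and
`v(x)/|x| → β` as `|x| → ∞`. -/
theorem linear_growth_of_potential
    (f : EuclideanSpace ℝ (Fin 3) → ℝ)
    (hfmeas : Measurable f) (hfnn : ∀ x, 0 ≤ f x)
    (hfint : Integrable f) (hfpos : 0 < ∫ y, f y)
    (v : EuclideanSpace ℝ (Fin 3) → ℝ)
    (hv : ∀ x, v x = (8 * π)⁻¹ * ∫ y, (‖x - y‖ - ‖y‖) * f y) :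
    (∀ x, |v x| ≤ ((8 * π)⁻¹ * ∫ y, f y) * ‖x‖) ∧
    Tendsto (fun x => v x / ‖x‖) (cocompact (EuclideanSpace ℝ (Fin 3)))
      (𝓝 ((8 * π)⁻¹ * ∫ y, f y)) := by
  have key : ∀ x y : EuclideanSpace ℝ (Fin 3), |‖x - y‖ - ‖y‖| ≤ ‖x‖ := by
    intro x y
    have h1 := norm_sub_le x y
    have h2 := norm_sub_norm_le y x
    have h3 := norm_sub_rev x y
    rw [abs_le]
    constructor <;> linarith
  have hpi : (0 : ℝ) ≤ (8 * π)⁻¹ := by positivity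
  constructor
  · intro x
    rw [hv, abs_mul, abs_of_nonneg hpi, mul_assoc]
    refine mul_le_mul_of_nonneg_left ?_ hpi
    rw [← Real.norm_eq_abs, mul_comm, ← integral_const_mul]
    refine norm_integral_le_of_norm_le (hfint.const_mul _) (Eventually.of_forall fun y => ?_)
    rw [norm_mul, Real.norm_eq_abs, Real.norm_eq_abs, abs_of_nonneg (hfnn y)]
    exact mul_le_mul_of_nonneg_right (key x y) (hfnn y)
  · have hE : (fun x => v x / ‖x‖) =
        fun x => (8 * π)⁻¹ * ∫ y, (‖x - y‖ - ‖y‖) / ‖x‖ * f y := by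
      funext x
      rw [hv, mul_div_assoc, ← integral_div]
      congr 2
      funext y
      ring
    rw [hE]
    refine Tendsto.const_mul _ ?_
    have hn : Tendsto (fun x : EuclideanSpace ℝ (Fin 3) => ‖x‖) (cocompact _) atTop :=
      tendsto_norm_cocompact_atTop
    haveI : (cocompact (EuclideanSpace ℝ (Fin 3))).IsCountablyGenerated := by
      rw [← Metric.cobounded_eq_cocompact, ← comap_norm_atTop]
      infer_instance
    refine tendsto_integral_filter_of_dominated_convergence f ?_ ?_ hfint ?_
    · refine Eventually.of_forall fun x => Measurable.aestronglyMeasurable ?_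
      fun_prop
    · refine Eventually.of_forall fun x => Eventually.of_forall fun y => ?_
      rw [norm_mul, norm_div, norm_norm, Real.norm_eq_abs, Real.norm_eq_abs,
        abs_of_nonneg (hfnn y)]
      exact mul_le_of_le_one_left (hfnn y) (div_le_one_of_le₀ (key x y) (norm_nonneg _))
    · refine Eventually.of_forall fun y => ?_
      have h0 : Tendsto (fun x : EuclideanSpace ℝ (Fin 3) => 2 * ‖y‖ / ‖x‖)
          (cocompact _) (𝓝 0) := hn.const_div_atTop _
      have h1 : Tendsto (fun x : EuclideanSpace ℝ (Fin 3) => (‖x - y‖ - ‖y‖) / ‖x‖)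
          (cocompact _) (𝓝 1) := by
        have hl : Tendsto (fun x : EuclideanSpace ℝ (Fin 3) => 1 - 2 * ‖y‖ / ‖x‖)
          (cocompact _) (𝓝 1) := by simpa using h0.const_sub 1
        refine tendsto_of_tendsto_of_tendsto_of_le_of_le' hl tendsto_const_nhds ?_ ?_
        · filter_upwards [hn.eventually_gt_atTop 0] with x hx
          rw [le_div_iff₀ hx, sub_mul, div_mul_cancel₀ _ hx.ne']
          have := norm_sub_norm_le x y
          linarith
        · exact Eventually.of_forall fun x =>
            div_le_one_of_le₀ ((le_abs_self _).trans (key x y)) (norm_nonneg _)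
      simpa using h1.mul_const (f y)
end

section
/- Let g : ℝ³ → (0, ∞) be a continuous function with g(−x) = g(x) for all x and ∫_{ℝ³}(1+|y|) g(y) dy < ∞. Define v(x) := (1/8π)∫_{ℝ³} (|x−y| − |y|) g(y) dy. Then v is twice continuously differentiable, its Hessian D²v(x) is positive definite at every x ∈ ℝ³ (so v is strictly convex), ∇v(0) = 0, and consequently v(x) ≥ v(0) = 0 for all x ∈ ℝ³, with the minimum of v attained exactly at 0. -/
open MeasureTheory Filter Topology Real

set_option maxSynthPendingDepth 3

local notation "E3" => EuclideanSpace ℝ (Fin 3)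

noncomputable def potJ : E3 →L[ℝ] (E3 →L[ℝ] ℝ) :=
  LinearMap.mkContinuous₂ (innerₗ E3) 1 (fun x y => by
    simpa using norm_inner_le_norm (𝕜 := ℝ) x y)

lemma potJ_apply (x y : E3) : potJ x y = inner ℝ x y := rfl

lemma potJ_norm_le (x : E3) : ‖potJ x‖ ≤ ‖x‖ :=
  ContinuousLinearMap.opNorm_le_bound _ (norm_nonneg _) fun y => by
    rw [potJ_apply]; exact norm_inner_le_norm (𝕜 := ℝ) x y

noncomputable def potG (z : E3) : E3 →L[ℝ] ℝ := potJ (‖z‖⁻¹ • z)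

lemma unit_norm_le (z : E3) : ‖‖z‖⁻¹ • z‖ ≤ 1 := by
  rw [norm_smul, norm_inv, norm_norm]
  exact inv_mul_le_one

lemma potG_norm_le (z : E3) : ‖potG z‖ ≤ 1 := (potJ_norm_le _).trans (unit_norm_le z)

lemma potG_lip (a b : E3) (hb : b ≠ 0) : ‖potG a - potG b‖ ≤ 2 * ‖b‖⁻¹ * ‖a - b‖ := by
  have hb' : 0 < ‖b‖ := norm_pos_iff.2 hb
  unfold potG
  rw [← map_sub]
  refine (potJ_norm_le _).trans ?_
  have key : ‖a‖⁻¹ • a - ‖b‖⁻¹ • b = ‖b‖⁻¹ • ((‖b‖ - ‖a‖) • (‖a‖⁻¹ • a) + (a - b)) := by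
    by_cases ha : a = 0
    · simp [ha]
    · have ha' : ‖a‖ ≠ 0 := norm_ne_zero_iff.2 ha
      have hb'' := hb'.ne'
      match_scalars <;> field_simp <;> ring
  rw [key, norm_smul, norm_inv, norm_norm]
  have h1 : ‖(‖b‖ - ‖a‖) • (‖a‖⁻¹ • a)‖ ≤ ‖a - b‖ := by
    rw [norm_smul]
    calc _ ≤ ‖a - b‖ * 1 := by
          gcongr
          · rw [norm_sub_rev a b]; exact abs_norm_sub_norm_le b a
          · exact unit_norm_le a
      _ = _ := mul_one _
  calc ‖b‖⁻¹ * ‖(‖b‖ - ‖a‖) • (‖a‖⁻¹ • a) + (a - b)‖ ≤ ‖b‖⁻¹ * (‖a - b‖ + ‖a - b‖) := by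
        gcongr
        exact (norm_add_le _ _).trans (by gcongr)
    _ = _ := by ring

lemma potG_contDiffAt {z : E3} (hz : z ≠ 0) : ContDiffAt ℝ 1 potG z := by
  unfold potG
  have h0 : ‖z‖ ≠ 0 := norm_ne_zero_iff.2 hz
  exact potJ.contDiff.contDiffAt.comp z (((contDiffAt_norm ℝ hz).inv h0).smul contDiffAt_id)

lemma norm_hasFDerivAt {z : E3} (hz : z ≠ 0) : HasFDerivAt (fun x : E3 => ‖x‖) (potG z) z := by
  have h0 : ‖z‖ ≠ 0 := norm_ne_zero_iff.2 hz
  have h1 : HasFDerivAt (fun x : E3 => ‖x‖ ^ 2) (2 • (innerSL ℝ z)) z :=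
    (hasStrictFDerivAt_norm_sq z).hasFDerivAt
  have h2 := h1.sqrt (by positivity)
  have : (fun x : E3 => √(‖x‖ ^ 2)) = fun x => ‖x‖ := by
    ext x; simp
  rw [this] at h2
  refine h2.congr_fderiv ?_
  refine ContinuousLinearMap.ext fun w => ?_
  simp [potG, potJ_apply, inner_smul_left]
  field_simp

noncomputable def potK (z : E3) : E3 →L[ℝ] E3 →L[ℝ] ℝ := fderiv ℝ potG z

lemma potG_hasFDerivAt {z : E3} (hz : z ≠ 0) : HasFDerivAt potG (potK z) z :=
  ((potG_contDiffAt hz).differentiableAt (by simp)).hasFDerivAt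

lemma potK_norm_le {z : E3} (hz : z ≠ 0) : ‖potK z‖ ≤ 2 * ‖z‖⁻¹ :=
  (potG_hasFDerivAt hz).le_of_lip' (by positivity)
    (Eventually.of_forall fun x => potG_lip x z hz)

lemma potK_apply {z : E3} (hz : z ≠ 0) (w : E3) :
    potK z w w = (‖z‖ ^ 2 * ‖w‖ ^ 2 - (inner ℝ z w) ^ 2) / ‖z‖ ^ 3 := by
  have h0 : ‖z‖ ≠ 0 := norm_ne_zero_iff.2 hz
  have h1 := (((hasDerivAt_inv h0).comp_hasFDerivAt z (norm_hasFDerivAt hz)).smul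
    (hasFDerivAt_id z))
  have h2 := potJ.hasFDerivAt.comp z h1
  have h3 : potK z = _ := (potG_hasFDerivAt hz).unique h2
  rw [h3]
  simp [potG, potJ_apply, inner_smul_left, inner_add_left]
  field_simp
  ring

lemma potK_nonneg {z : E3} (hz : z ≠ 0) (w : E3) : 0 ≤ potK z w w := by
  rw [potK_apply hz]
  apply div_nonneg _ (by positivity)
  have := abs_real_inner_le_norm z w
  nlinarith [sq_abs (inner ℝ z w), abs_nonneg (inner ℝ z w), sq_nonneg (‖z‖ * ‖w‖ - |inner ℝ z w|), norm_nonneg z, norm_nonneg w, mul_nonneg (norm_nonneg z) (norm_nonneg w)]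

lemma potK_pos {z w : E3} (hw : w ≠ 0) (h : z ∉ Submodule.span ℝ {w}) : 0 < potK z w w := by
  have hz : z ≠ 0 := by rintro rfl; exact h (Submodule.zero_mem _)
  have h0 : 0 < ‖z‖ := norm_pos_iff.2 hz
  rw [potK_apply hz]
  apply div_pos _ (by positivity)
  have hne : ‖z‖ ^ 2 • w - (inner ℝ z w : ℝ) • z ≠ 0 := by
    intro hh
    rw [sub_eq_zero] at hh
    have hi : (inner ℝ z w : ℝ) ≠ 0 := by
      intro hi
      rw [hi, zero_smul, smul_eq_zero] at hh
      rcases hh with hh | hh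
      · exact h0.ne' (pow_eq_zero_iff (by norm_num) |>.1 hh)
      · exact hw hh
    apply h
    rw [Submodule.mem_span_singleton]
    refine ⟨(inner ℝ z w : ℝ)⁻¹ * ‖z‖ ^ 2, ?_⟩
    rw [mul_smul, hh, smul_smul, inv_mul_cancel₀ hi, one_smul]
  have hp : 0 < ‖‖z‖ ^ 2 • w - (inner ℝ z w : ℝ) • z‖ ^ 2 := by
    have := norm_pos_iff.2 hne; positivity
  rw [norm_sub_sq_real, norm_smul, norm_smul, inner_smul_left, inner_smul_right,
    real_inner_comm z w] at hp
  simp only [norm_pow, norm_norm, mul_pow, Real.norm_eq_abs, sq_abs, conj_trivial] at hp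
  have : 0 < ‖z‖ ^ 2 * (‖z‖ ^ 2 * ‖w‖ ^ 2 - (inner ℝ z w) ^ 2) := by
    nlinarith
  exact pos_of_mul_pos_right this (by positivity)

lemma ae_not_mem_span (x w : E3) : ∀ᵐ y : E3, x - y ∉ Submodule.span ℝ {w} := by
  have hne : Submodule.span ℝ {w} ≠ (⊤ : Submodule ℝ E3) := by
    intro h
    have h1 := finrank_span_le_card (R := ℝ) ({w} : Set E3)
    rw [h, finrank_top] at h1
    simp at h1
  have h0 := Measure.addHaar_submodule (volume : Measure E3) _ hne
  have := (Measure.measurePreserving_sub_left (volume : Measure E3) x).quasiMeasurePreserving.preimage_null h0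
  rw [ae_iff]
  simp only [not_not]
  exact this

lemma ae_sub_ne (x : E3) : ∀ᵐ y : E3, x - y ≠ 0 := by
  filter_upwards [ae_not_mem_span x 0] with y hy h
  exact hy (by rw [h]; exact Submodule.zero_mem _)

lemma integral_pos_ae {f : E3 → ℝ} (hf : Integrable f) (hp : ∀ᵐ y, 0 < f y) : 0 < ∫ y, f y := by
  have h0 : 0 ≤ᵐ[volume] f := hp.mono fun y hy => hy.le
  refine lt_of_le_of_ne (integral_nonneg_of_ae h0) fun h => ?_
  have h1 := (integral_eq_zero_iff_of_nonneg_ae h0 hf).1 h.symm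
  have : ∀ᵐ y : E3, False := by
    filter_upwards [hp, h1] with y a b
    rw [b] at a; simp at a
  simp only [eventually_false_iff_eq_bot, ae_eq_bot] at this
  exact NeZero.ne _ this

lemma eq_zero_of_eq_neg {V : Type*} [AddCommGroup V] [Module ℝ V] {x : V} (h : x = -x) :
    x = 0 := by
  have h2 : (2 : ℝ) • x = 0 := by
    rw [two_smul]
    nth_rewrite 2 [h]
    exact add_neg_cancel x
  exact (smul_eq_zero.1 h2).resolve_left two_ne_zero

noncomputable def potN (z : E3) : ℝ := (Metric.closedBall (0 : E3) 1).indicator (fun z => ‖z‖⁻¹) z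

lemma potN_nonneg (z : E3) : 0 ≤ potN z :=
  Set.indicator_nonneg (fun _ _ => by positivity) z

lemma potN_integrable : Integrable potN := by
  have h : LocallyIntegrable (fun z : E3 => ‖z‖⁻¹) :=
    locallyIntegrable_of_norm_le_rpow (C := 1) (α := 1) (by simp) (by simp)
      (Eventually.of_forall fun z => by simp [Real.rpow_neg_one]) (by fun_prop)
  exact (h.integrableOn_isCompact (isCompact_closedBall 0 1)).integrable_indicator
    Metric.isClosed_closedBall.measurableSet

lemma inv_le_potN (z : E3) : ‖z‖⁻¹ ≤ potN z + 1 := by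
  unfold potN
  by_cases h : z ∈ Metric.closedBall (0 : E3) 1
  · rw [Set.indicator_of_mem h]; linarith
  · rw [Set.indicator_of_notMem h]
    simp only [Metric.mem_closedBall, dist_zero_right, not_le] at h
    rw [zero_add]
    exact inv_le_one_of_one_le₀ h.le

lemma potN_of_one_lt {z : E3} (h : 1 < ‖z‖) : potN z = 0 :=
  Set.indicator_of_notMem (by simpa using h) _

lemma potG_measurable : Measurable potG := by
  unfold potG
  exact potJ.continuous.measurable.comp (by fun_prop)

lemma potK_measurable : Measurable potK := measurable_fderiv ℝ potG

section
variable {g : E3 → ℝ}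

lemma g_int (hgcont : Continuous g) (hgpos : ∀ x, 0 < g x)
    (hgint : Integrable (fun y => (1 + ‖y‖) * g y)) : Integrable g :=
  hgint.mono' hgcont.aestronglyMeasurable (Eventually.of_forall fun y => by
    rw [Real.norm_of_nonneg (hgpos y).le]
    nlinarith [hgpos y, norm_nonneg y, mul_nonneg (norm_nonneg y) (hgpos y).le])

lemma g_bdd (hgcont : Continuous g) (x : E3) (R : ℝ) :
    ∃ C, 0 ≤ C ∧ ∀ y, ‖x - y‖ ≤ R → ‖g y‖ ≤ C := by
  obtain ⟨C, hC⟩ := (isCompact_closedBall x R).exists_bound_of_continuousOn hgcont.continuousOn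
  exact ⟨max C 0, le_max_right _ _, fun y hy => (hC y (by
    rw [Metric.mem_closedBall, dist_comm, dist_eq_norm]; exact hy)).trans (le_max_left _ _)⟩

lemma inv_mul_int (hgcont : Continuous g) (hgi : Integrable g) (x : E3) :
    Integrable (fun y => ‖x - y‖⁻¹ * g y) := by
  obtain ⟨C, hC0, hC⟩ := g_bdd hgcont x 1
  have h1 : Integrable (fun y => potN (x - y) * C + ‖g y‖) :=
    ((potN_integrable.comp_sub_left x).mul_const C).add hgi.norm
  refine h1.mono' ?_ (Eventually.of_forall fun y => ?_)
  · exact (Measurable.mul (by fun_prop) hgcont.measurable).aestronglyMeasurable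
  · rw [norm_mul, norm_inv, norm_norm]
    have a := inv_le_potN (x - y)
    have : potN (x - y) * ‖g y‖ ≤ potN (x - y) * C := by
      by_cases h : ‖x - y‖ ≤ 1
      · exact mul_le_mul_of_nonneg_left (hC y h) (potN_nonneg _)
      · rw [potN_of_one_lt (not_le.1 h)]; simp
    nlinarith [norm_nonneg (g y), mul_le_mul_of_nonneg_right a (norm_nonneg (g y))]

lemma int_base (hgcont : Continuous g) (hgi : Integrable g) (x : E3) :
    Integrable (fun y => (‖x - y‖ - ‖y‖) * g y) := by
  refine (hgi.norm.const_mul ‖x‖).mono' ?_ (Eventually.of_forall fun y => ?_)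
  · exact Continuous.aestronglyMeasurable (by fun_prop)
  · rw [norm_mul]
    gcongr
    have := abs_norm_sub_norm_le (x - y) (-y)
    simpa using this

lemma deriv1 (hgcont : Continuous g) (hgi : Integrable g) (x : E3) :
    HasFDerivAt (fun x => ∫ y, (‖x - y‖ - ‖y‖) * g y) (∫ y, g y • potG (x - y)) x := by
  refine (hasFDerivAt_integral_of_dominated_loc_of_lip' (bound := fun y => ‖g y‖)
    (s := Set.univ) univ_mem (fun x _ => (int_base hgcont hgi x).aestronglyMeasurable)
    (int_base hgcont hgi x) ?_ ?_ hgi.norm ?_).2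
  · exact hgcont.aestronglyMeasurable.smul
      (potG_measurable.comp (by fun_prop)).aestronglyMeasurable
  · refine Eventually.of_forall fun y x' _ => ?_
    rw [← sub_mul, norm_mul, mul_comm]
    gcongr
    have := abs_norm_sub_norm_le (x' - y) (x - y)
    simpa using this
  · filter_upwards [ae_sub_ne x] with y hy
    have h := ((norm_hasFDerivAt hy).comp x ((hasFDerivAt_id x).sub_const y)).sub_const ‖y‖
    simpa using h.mul_const (g y)

lemma int_G (hgcont : Continuous g) (hgi : Integrable g) (x : E3) :
    Integrable (fun y => g y • potG (x - y)) := by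
  refine hgi.norm.mono' (hgcont.aestronglyMeasurable.smul
      (potG_measurable.comp (by fun_prop)).aestronglyMeasurable) (Eventually.of_forall fun y => ?_)
  rw [norm_smul]
  exact mul_le_of_le_one_right (norm_nonneg _) (potG_norm_le _)

lemma deriv2 (hgcont : Continuous g) (hgi : Integrable g) (x : E3) :
    Integrable (fun y => g y • potK (x - y)) ∧
    HasFDerivAt (fun x => ∫ y, g y • potG (x - y)) (∫ y, g y • potK (x - y)) x := by
  refine hasFDerivAt_integral_of_dominated_loc_of_lip'
    (bound := fun y => 2 * ‖‖x - y‖⁻¹ * g y‖)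
    (s := Set.univ) univ_mem (fun x _ => (int_G hgcont hgi x).aestronglyMeasurable)
    (int_G hgcont hgi x) ?_ ?_ ((inv_mul_int hgcont hgi x).norm.const_mul 2) ?_
  · exact hgcont.aestronglyMeasurable.smul
      (potK_measurable.comp (by fun_prop)).aestronglyMeasurable
  · filter_upwards [ae_sub_ne x] with y hy x' _
    rw [← smul_sub, norm_smul]
    have := potG_lip (x' - y) (x - y) hy
    rw [sub_sub_sub_cancel_right] at this
    refine (mul_le_mul_of_nonneg_left this (norm_nonneg _)).trans (le_of_eq ?_)
    rw [norm_mul, norm_inv, norm_norm]; ring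
  · filter_upwards [ae_sub_ne x] with y hy
    have h := ((potG_hasFDerivAt hy).comp x ((hasFDerivAt_id x).sub_const y))
    exact h.const_smul (g y)

lemma potK_contAt {z : E3} (hz : z ≠ 0) : ContinuousAt potK z :=
  (potG_contDiffAt hz).continuousAt_fderiv (by simp)

noncomputable def potK1 (z : E3) : E3 →L[ℝ] E3 →L[ℝ] ℝ := min 1 ‖z‖ • potK z
noncomputable def potK0 (z : E3) : E3 →L[ℝ] E3 →L[ℝ] ℝ := (1 - min 1 ‖z‖) • potK z

lemma potK1_measurable : Measurable potK1 :=
  Measurable.smul (f := fun z : E3 => min 1 ‖z‖) (by fun_prop) potK_measurable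
lemma potK0_measurable : Measurable potK0 :=
  Measurable.smul (f := fun z : E3 => 1 - min 1 ‖z‖) (by fun_prop) potK_measurable

lemma potK1_norm_le {z : E3} (hz : z ≠ 0) : ‖potK1 z‖ ≤ 2 := by
  have h0 : 0 < ‖z‖ := norm_pos_iff.2 hz
  unfold potK1
  rw [norm_smul, Real.norm_of_nonneg (by positivity)]
  calc _ ≤ ‖z‖ * (2 * ‖z‖⁻¹) := by
        gcongr
        · exact min_le_right _ _
        · exact potK_norm_le hz
    _ = 2 := by field_simp

lemma potK0_norm_le {z : E3} (hz : z ≠ 0) : ‖potK0 z‖ ≤ 2 * potN z := by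
  unfold potK0
  by_cases h : ‖z‖ ≤ 1
  · rw [norm_smul, potN, Set.indicator_of_mem (by simpa using h), min_eq_right h,
      Real.norm_of_nonneg (by linarith)]
    calc _ ≤ 1 * (2 * ‖z‖⁻¹) := by
          gcongr
          · linarith [norm_nonneg z]
          · exact potK_norm_le hz
      _ = _ := one_mul _
  · rw [min_eq_left (not_le.1 h).le]
    simpa using potN_nonneg z

lemma ae_ne : ∀ᵐ z : E3, z ≠ 0 := by
  filter_upwards [ae_sub_ne 0] with y hy
  simpa using hy

lemma int_K1 (hgcont : Continuous g) (hgi : Integrable g) (x : E3) :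
    Integrable (fun y => g y • potK1 (x - y)) := by
  refine (hgi.norm.mul_const 2).mono' (hgcont.aestronglyMeasurable.smul
      (potK1_measurable.comp (by fun_prop)).aestronglyMeasurable) ?_
  filter_upwards [ae_sub_ne x] with y hy
  rw [norm_smul]
  gcongr
  exact potK1_norm_le hy

lemma cont1 (hgcont : Continuous g) (hgi : Integrable g) :
    Continuous (fun x => ∫ y, g y • potK1 (x - y)) := by
  rw [continuous_iff_continuousAt]
  intro x
  refine continuousAt_of_dominated (bound := fun y => ‖g y‖ * 2)
    (Eventually.of_forall fun x => (int_K1 hgcont hgi x).aestronglyMeasurable)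
    (Eventually.of_forall fun x => ?_) (hgi.norm.mul_const 2) ?_
  · filter_upwards [ae_sub_ne x] with y hy
    rw [norm_smul]
    gcongr
    exact potK1_norm_le hy
  · filter_upwards [ae_sub_ne x] with y hy
    have h1 : ContinuousAt potK1 (x - y) :=
      ContinuousAt.smul (f := fun z : E3 => min 1 ‖z‖) (by fun_prop) (potK_contAt hy)
    have h2 : ContinuousAt (fun x => x - y) x := by fun_prop
    exact (continuousAt_const (y := g y)).smul (ContinuousAt.comp (f := fun x => x - y) h1 h2)

lemma cont0 (hgcont : Continuous g) :
    Continuous (fun x => ∫ z, g (x - z) • potK0 z) := by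
  rw [continuous_iff_continuousAt]
  intro x
  obtain ⟨C, hC0, hC⟩ := g_bdd hgcont x 2
  refine continuousAt_of_dominated (bound := fun z => C * (2 * potN z))
    (Eventually.of_forall fun x =>
      (Continuous.aestronglyMeasurable (f := fun z => g (x - z)) (by fun_prop)).smul
      potK0_measurable.aestronglyMeasurable)
    ?_ ((potN_integrable.const_mul 2).const_mul C) ?_
  · filter_upwards [Metric.ball_mem_nhds x one_pos] with x' hx'
    filter_upwards [ae_ne] with z hz
    rw [norm_smul]
    by_cases h : ‖z‖ ≤ 1
    · gcongr
      · apply hC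
        rw [Metric.mem_ball, dist_comm, dist_eq_norm] at hx'
        calc ‖x - (x' - z)‖ = ‖(x - x') + z‖ := by congr 1; abel
          _ ≤ ‖x - x'‖ + ‖z‖ := norm_add_le _ _
          _ ≤ 2 := by linarith
      · exact potK0_norm_le hz
    · have := potK0_norm_le hz
      rw [potN_of_one_lt (not_le.1 h), mul_zero] at this ⊢
      rw [le_antisymm this (norm_nonneg _)]; simp
  · refine Eventually.of_forall fun z => ?_
    exact ContinuousAt.smul (f := fun x => g (x - z)) (by fun_prop) continuousAt_const

lemma contK (hgcont : Continuous g) (hgi : Integrable g) :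
    Continuous (fun x => ∫ y, g y • potK (x - y)) := by
  have : (fun x => ∫ y, g y • potK (x - y)) =
      fun x => (∫ y, g y • potK1 (x - y)) + ∫ z, g (x - z) • potK0 z := by
    ext1 x
    have h0 : ∀ y, g y • potK (x - y) = g y • potK1 (x - y) + g y • potK0 (x - y) := by
      intro y
      rw [← smul_add, potK1, potK0, ← add_smul]; simp
    have hi : Integrable (fun y => g y • potK0 (x - y)) := by
      have := (deriv2 hgcont hgi x).1.sub (int_K1 hgcont hgi x)
      refine this.congr (Eventually.of_forall fun y => ?_)
      simp only [Pi.sub_apply, h0, add_sub_cancel_left]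
    simp_rw [h0]
    rw [integral_add (int_K1 hgcont hgi x) hi]
    congr 1
    rw [← integral_sub_left_eq_self (fun y => g y • potK0 (x - y)) volume x]
    simp
  rw [this]
  exact (cont1 hgcont hgi).add (cont0 hgcont)

end

theorem potential_strictly_convex_min_at_origin
    (g : EuclideanSpace ℝ (Fin 3) → ℝ)
    (hgcont : Continuous g) (hgpos : ∀ x, 0 < g x) (hgeven : ∀ x, g (-x) = g x)
    (hgint : Integrable (fun y => (1 + ‖y‖) * g y))
    (v : EuclideanSpace ℝ (Fin 3) → ℝ)
    (hv : ∀ x, v x = (8 * π)⁻¹ * ∫ y, (‖x - y‖ - ‖y‖) * g y) :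
    ContDiff ℝ 2 v ∧
    (∀ x, ∀ w : EuclideanSpace ℝ (Fin 3), w ≠ 0 → 0 < iteratedFDeriv ℝ 2 v x ![w, w]) ∧
    StrictConvexOn ℝ Set.univ v ∧
    fderiv ℝ v 0 = 0 ∧
    v 0 = 0 ∧ (∀ x, 0 ≤ v x) ∧ (∀ x, x ≠ 0 → 0 < v x) := by
  have hgi := g_int hgcont hgpos hgint
  have hc : 0 < (8 * π)⁻¹ := by positivity
  have hv' : v = fun x => (8 * π)⁻¹ * ∫ y, (‖x - y‖ - ‖y‖) * g y := funext hv
  have hd1 : ∀ x, HasFDerivAt v ((8 * π)⁻¹ • ∫ y, g y • potG (x - y)) x := by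
    intro x
    rw [hv']
    exact (deriv1 hgcont hgi x).const_mul _
  have hf1 : fderiv ℝ v = fun x => (8 * π)⁻¹ • ∫ y, g y • potG (x - y) :=
    funext fun x => (hd1 x).fderiv
  have hd2 : ∀ x, HasFDerivAt (fderiv ℝ v) ((8 * π)⁻¹ • ∫ y, g y • potK (x - y)) x := by
    intro x
    rw [hf1]
    exact (deriv2 hgcont hgi x).2.const_smul (8 * π)⁻¹
  have hf2 : fderiv ℝ (fderiv ℝ v) = fun x => (8 * π)⁻¹ • ∫ y, g y • potK (x - y) :=
    funext fun x => (hd2 x).fderiv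
  have heven : ∀ x, v (-x) = v x := by
    intro x
    rw [hv, hv, ← integral_neg_eq_self (fun y => (‖-x - y‖ - ‖y‖) * g y)]
    congr 2
    ext y
    rw [hgeven, norm_neg, show -x - -y = -(x - y) by abel, norm_neg]
  have hv0 : v 0 = 0 := by rw [hv]; simp
  have hsc : StrictConvexOn ℝ Set.univ v := by
    refine ⟨convex_univ, fun x _ z _ hxz a b ha hb hab => ?_⟩
    have hx := int_base hgcont hgi x
    have hz := int_base hgcont hgi z
    have hm := int_base hgcont hgi (a • x + b • z)
    have hi := ((hx.const_mul a).add (hz.const_mul b)).sub hm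
    have hpos : 0 < ∫ y, (((fun y => a * ((‖x - y‖ - ‖y‖) * g y)) +
        fun y => b * ((‖z - y‖ - ‖y‖) * g y)) - fun y => (‖a • x + b • z - y‖ - ‖y‖) * g y) y := by
      refine integral_pos_ae hi ?_
      filter_upwards [ae_not_mem_span x (x - z)] with y hy
      have hsr : ¬ SameRay ℝ (a • (x - y)) (b • (z - y)) := by
        intro hs
        obtain ⟨u, r', s', -, -, -, h1', h2'⟩ := hs.exists_eq_smul
        obtain ⟨r, h1⟩ : ∃ r : ℝ, x - y = r • u :=
          ⟨a⁻¹ * r', by rw [mul_smul, ← h1', smul_smul, inv_mul_cancel₀ ha.ne', one_smul]⟩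
        obtain ⟨s, h2⟩ : ∃ s : ℝ, z - y = s • u :=
          ⟨b⁻¹ * s', by rw [mul_smul, ← h2', smul_smul, inv_mul_cancel₀ hb.ne', one_smul]⟩
        apply hy
        have h3 : x - z = (r - s) • u := by
          rw [sub_smul, ← h1, ← h2]; abel
        have h4 : r - s ≠ 0 := by
          intro h4
          rw [h4, zero_smul, sub_eq_zero] at h3
          exact hxz h3
        rw [Submodule.mem_span_singleton]
        refine ⟨r / (r - s), ?_⟩
        rw [h3, smul_smul, div_mul_cancel₀ _ h4, h1]
      have hlt := norm_add_lt_of_not_sameRay hsr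
      rw [norm_smul, norm_smul, Real.norm_of_nonneg ha.le, Real.norm_of_nonneg hb.le] at hlt
      have he : a • (x - y) + b • (z - y) = a • x + b • z - y := by
        have : y = (a + b) • y := by rw [hab, one_smul]
        nth_rewrite 3 [this]
        module
      rw [he] at hlt
      simp only [Pi.sub_apply, Pi.add_apply]
      have : a * ((‖x - y‖ - ‖y‖) * g y) + b * ((‖z - y‖ - ‖y‖) * g y) -
          (‖a • x + b • z - y‖ - ‖y‖) * g y =
          (a * ‖x - y‖ + b * ‖z - y‖ - ‖a • x + b • z - y‖) * g y := by
        have : b = 1 - a := by linarith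
        subst this; ring
      rw [this]
      exact mul_pos (by linarith) (hgpos y)
    rw [integral_sub' ((hx.const_mul a).add (hz.const_mul b)) hm,
      integral_add' (hx.const_mul a) (hz.const_mul b), integral_const_mul, integral_const_mul] at hpos
    rw [hv, hv, hv, smul_eq_mul, smul_eq_mul]
    nlinarith [mul_pos hc hpos]
  have hvpos : ∀ x, x ≠ 0 → 0 < v x := by
    intro x hx
    have hne : x ≠ -x := fun h => hx (eq_zero_of_eq_neg h)
    have := hsc.2 (Set.mem_univ x) (Set.mem_univ (-x)) hne
      (show (0:ℝ) < 1/2 by norm_num) (show (0:ℝ) < 1/2 by norm_num) (by norm_num)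
    rw [heven, smul_neg, add_neg_cancel, hv0, smul_eq_mul] at this
    linarith
  refine ⟨?_, ?_, hsc, ?_, hv0, ?_, hvpos⟩
  · rw [show (2 : WithTop ℕ∞) = 1 + 1 by norm_num, contDiff_succ_iff_fderiv]
    refine ⟨fun x => (hd1 x).differentiableAt, by simp, ?_⟩
    rw [contDiff_one_iff_fderiv]
    refine ⟨fun x => (hd2 x).differentiableAt, ?_⟩
    rw [hf2]
    exact (contK hgcont hgi).const_smul (8 * π)⁻¹
  · intro x w hw
    rw [iteratedFDeriv_two_apply, hf2]
    have hi := (deriv2 hgcont hgi x).1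
    have hi1 := hi.apply_continuousLinearMap w
    simp only [Matrix.cons_val_zero, Matrix.cons_val_one, smul_apply, smul_eq_mul]
    rw [ContinuousLinearMap.integral_apply hi, ContinuousLinearMap.integral_apply hi1]
    refine mul_pos hc (integral_pos_ae (hi1.apply_continuousLinearMap w) ?_)
    filter_upwards [ae_not_mem_span x w] with y hy
    exact mul_pos (hgpos y) (potK_pos hw hy)
  · have h1 := hd1 0
    have h2 : HasFDerivAt v ((8 * π)⁻¹ • ∫ y, g y • potG (0 - y)) (-(0 : E3)) := by
      rw [neg_zero]; exact h1
    have h3 := h2.comp (0 : E3) (hasFDerivAt_id (0 : E3)).neg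
    have h5 := h1.unique (h3.congr_of_eventuallyEq (Eventually.of_forall fun x => (heven x).symm))
    rw [h1.fderiv]
    apply eq_zero_of_eq_neg
    refine h5.trans (ContinuousLinearMap.ext fun w => ?_)
    simp
  · intro x
    by_cases hx : x = 0
    · rw [hx, hv0]
    · exact (hvpos x hx).le
end
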